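/- Let (Ω, 𝒜, μ) be a σ-finite measure space and T₁,…,T_d a commuting family of positive Dunford–Schwartz operators. Then for every f ∈ L¹(μ) and every sequence n(k) ∈ ℕ^d with n(k) → ∞ that remains in a sector of ℕ^d, the averages A_{n(k)}(f) converge almost uniformly as k → ∞ to some f̂ ∈ L¹(μ). -/

import Mathlib

open MeasureTheory Filter Set ENNReal Topology

variable {Ω : Type*} [MeasurableSpace Ω]

/-- `f` belongs to `L¹(μ) + L^∞(μ)`. -/
def MemL1pLinf (μ : Measure Ω) (f : Ω →ₘ[μ] ℝ) : Prop :=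
  ∃ g h : Ω →ₘ[μ] ℝ, eLpNorm g 1 μ ≠ ∞ ∧ eLpNorm h ⊤ μ ≠ ∞ ∧ f = g + h

/-- A positive Dunford–Schwartz operator: linear and positive on `L¹+L^∞`,
contracting both the `L¹`- and `L^∞`-norms. -/
structure IsPosDS (μ : Measure Ω) (T : (Ω →ₘ[μ] ℝ) → (Ω →ₘ[μ] ℝ)) : Prop where
  map_add : ∀ f g, MemL1pLinf μ f → MemL1pLinf μ g → T (f + g) = T f + T g
  map_smul : ∀ (c : ℝ) (f), MemL1pLinf μ f → T (c • f) = c • T f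
  map_pos : ∀ f, MemL1pLinf μ f → 0 ≤ f → 0 ≤ T f
  norm_one : ∀ f, MemL1pLinf μ f → eLpNorm (T f) 1 μ ≤ eLpNorm f 1 μ
  norm_top : ∀ f, MemL1pLinf μ f → eLpNorm (T f) ⊤ μ ≤ eLpNorm f ⊤ μ

/-- The Cesàro averages `A_n(f) = (1/n) ∑_{k<n} T^k f`. -/
noncomputable def cesaro (μ : Measure Ω) (T : (Ω →ₘ[μ] ℝ) → (Ω →ₘ[μ] ℝ)) (n : ℕ)
    (f : Ω →ₘ[μ] ℝ) : Ω →ₘ[μ] ℝ :=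
  (n : ℝ)⁻¹ • ∑ k ∈ Finset.range n, T^[k] f

/-- Almost uniform convergence of a net `F` to `f`. -/
def AuTendsto {ι : Type*} (μ : Measure Ω) (l : Filter ι) (F : ι → Ω →ₘ[μ] ℝ)
    (f : Ω →ₘ[μ] ℝ) : Prop :=
  ∀ ε : ℝ, 0 < ε → ∃ E : Set Ω, MeasurableSet E ∧ μ Eᶜ ≤ ENNReal.ofReal ε ∧
    Tendsto (fun i => eLpNorm (E.indicator (⇑(F i - f))) ⊤ μ) l (𝓝 0)

/-- `R_μ`: elements of `L¹+L^∞` whose distribution tails are finite. -/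
def MemRmu (μ : Measure Ω) (f : Ω →ₘ[μ] ℝ) : Prop :=
  MemL1pLinf μ f ∧ ∀ lam : ℝ, 0 < lam → μ {ω | lam < |f ω|} < ∞

/-- `T₁^{k₁} ∘ ⋯ ∘ T_d^{k_d}` for a family `T` of operators. -/
def iterComp {E : Type*} {d : ℕ} (T : Fin d → E → E) (k : Fin d → ℕ) : E → E :=
  (List.ofFn fun i => (T i)^[k i]).foldr (· ∘ ·) id

/-- The multiparameter averages
`A_n(f) = (n₁⋯n_d)⁻¹ ∑_{i₁<n₁} ⋯ ∑_{i_d<n_d} T₁^{i₁}⋯T_d^{i_d} f`. -/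
noncomputable def multiAvg (μ : Measure Ω) {d : ℕ}
    (T : Fin d → (Ω →ₘ[μ] ℝ) → (Ω →ₘ[μ] ℝ)) (n : Fin d → ℕ)
    (f : Ω →ₘ[μ] ℝ) : Ω →ₘ[μ] ℝ :=
  (∏ i, (n i : ℝ))⁻¹ •
    ∑ k ∈ Fintype.piFinset (fun i => Finset.range (n i)), iterComp T k f

/-- A sequence `n(k) ∈ ℕ^d` remains in a sector of `ℕ^d`. -/
def InSector {d : ℕ} (n : ℕ → Fin d → ℕ) : Prop :=
  ∃ c₀ : ℝ, ∀ k, ∀ i j, n k j ≠ 0 → (n k i : ℝ) / (n k j : ℝ) ≤ c₀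

noncomputable def bp (j k : ℕ) : ℝ :=
  (1/2)^j * ∏ i ∈ Finset.range k,
    ((2*i+j)*(2*i+j+1) / (4*(i+1)*(i+j+1)) : ℝ)

lemma bp_zero (j : ℕ) : bp j 0 = (1/2)^j := by simp [bp]

lemma bp_succ (j k : ℕ) :
    bp j (k+1) = bp j k * ((2*k+j)*(2*k+j+1) / (4*(k+1)*(k+j+1)) : ℝ) := by
  rw [bp, bp, Finset.prod_range_succ]; ring

lemma bp_nonneg (j k : ℕ) : 0 ≤ bp j k := by
  unfold bp; positivity

lemma bp_j (j k : ℕ) : (j:ℝ) * (2*(k+j+1)) * bp (j+1) k = (j+1)*(2*k+j) * bp j k := by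
  induction k with
  | zero => simp [bp_zero, pow_succ]; ring
  | succ k ih =>
    rw [bp_succ, bp_succ]
    push_cast
    have h1 : ((k:ℝ)+j+1) ≠ 0 := by positivity
    have h2 : ((k:ℝ)+(j+1)+1) ≠ 0 := by positivity
    have h3 : ((k:ℝ)+1) ≠ 0 := by positivity
    have : (j:ℝ) * bp (j+1) k = (j+1)*(2*k+j) * bp j k / (2*(k+j+1)) := by
      rw [← ih]; field_simp
    calc _ = ((j:ℝ) * bp (j+1) k) * (2 * (k+1+j+1) * ((2 * ↑k + (↑j + 1)) * (2 * ↑k + (↑j + 1) + 1) / (4 * (↑k + 1) * (↑k + (↑j + 1) + 1)))) := by ring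
      _ = _ := by rw [this]; field_simp; ring

lemma bp_rec (j k : ℕ) : bp (j+1) (k+1) = (1/2) * (bp j (k+1) + bp (j+2) k) := by
  have h1 := bp_j (j+1) k
  have h2 := bp_j j (k+1)
  have h3 := bp_succ (j+1) k
  push_cast at h1 h2 h3
  have e1 : bp (j+2) k = (j+1+1)*(2*k+(j+1)) * bp (j+1) k / ((j+1) * (2*(k+(j+1)+1))) := by
    rw [← h1]; field_simp; try rfl
  have e2 : bp j (k+1) = (j:ℝ) * (2*(k+1+j+1)) * bp (j+1) (k+1) / ((j+1)*(2*(k+1)+j)) := by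
    rw [h2]; field_simp
  rw [e2, e1, h3]
  have : (2*((k:ℝ)+1)+j) ≠ 0 := by positivity
  field_simp
  ring

lemma bp_one_zero_rec (k : ℕ) : bp 0 (k+1) = 0 := by
  induction k with
  | zero => simp [bp]
  | succ k ih => rw [bp_succ, ih]; simp

lemma bp_one_catalan (k : ℕ) : bp 1 k = catalan k / 2^(2*k+1) := by
  induction k with
  | zero => simp [bp_zero]
  | succ k ih =>
    rw [bp_succ, ih, catalan_eq_centralBinom_div, catalan_eq_centralBinom_div]
    rw [Nat.cast_div (Nat.succ_dvd_centralBinom k) (by positivity),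
      Nat.cast_div (Nat.succ_dvd_centralBinom (k+1)) (by positivity)]
    have := Nat.succ_mul_centralBinom_succ k
    have h : ((k:ℝ)+1) * (k+1).centralBinom = 2 * (2*k+1) * k.centralBinom := by exact_mod_cast this
    have h' : ((k+1).centralBinom : ℝ) = 2 * (2*k+1) * k.centralBinom / (k+1) := by
      rw [← h]; field_simp
    rw [h']
    push_cast
    have : (2:ℝ)^(2*(k+1)+1) = 2^(2*k+1) * 4 := by rw [show 2*(k+1)+1 = (2*k+1)+2 by ring, pow_add]; norm_num
    rw [this]
    field_simp
    ring

lemma bp_one_conv (k : ℕ) :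
    bp 1 (k+1) = (1/2) * ∑ ij ∈ Finset.HasAntidiagonal.antidiagonal k, bp 1 ij.1 * bp 1 ij.2 := by
  rw [bp_one_catalan, catalan_succ']
  push_cast
  rw [Finset.sum_div, Finset.mul_sum]
  refine Finset.sum_congr rfl fun ij hij => ?_
  rw [bp_one_catalan, bp_one_catalan]
  have := Finset.HasAntidiagonal.mem_antidiagonal.1 hij
  rw [← this]
  rw [show 2*(ij.1+ij.2+1)+1 = (2*ij.1+1)+(2*ij.2+1)+1 by ring, pow_succ, pow_add]
  field_simp

noncomputable def bw (k : ℕ) : ℝ := 2 * (k+1) * bp 1 k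

lemma bw_succ (k : ℕ) : bw (k+1) = bw k * ((2*k+1)/(2*k+2)) := by
  unfold bw; rw [bp_succ]; push_cast; field_simp; ring

lemma bp_one_sum (n : ℕ) : ∑ k ∈ Finset.range n, bp 1 k = 1 - bw n := by
  induction n with
  | zero => simp [bw, bp_zero]
  | succ k ih =>
    rw [Finset.sum_range_succ, ih, bw_succ]
    have : bp 1 k = bw k / (2*(k+1)) := by unfold bw; field_simp
    rw [this]; field_simp; ring

lemma bw_nonneg (k : ℕ) : 0 ≤ bw k := by
  have := bp_nonneg 1 k
  unfold bw; positivity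

lemma bp_one_sum_le (n : ℕ) : ∑ k ∈ Finset.range n, bp 1 k ≤ 1 := by
  rw [bp_one_sum]; linarith [bw_nonneg n]

lemma bp_one_summable : Summable (bp 1) :=
  summable_of_sum_range_le (fun k => bp_nonneg 1 k) bp_one_sum_le

lemma bw_sq (k : ℕ) : 1/4 ≤ bw k ^ 2 * (k+1) := by
  have key : ∀ k : ℕ, 1/4 ≤ bw (k+1) ^ 2 * (k+1) := by
    intro k
    induction k with
    | zero => rw [bw_succ]; simp [bw, bp_zero]; norm_num
    | succ k ih =>
      rw [bw_succ]
      push_cast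
      have h0 : 0 ≤ bw (k+1)^2 := by positivity
      refine ih.trans ?_
      rw [mul_pow, mul_assoc]
      refine mul_le_mul_of_nonneg_left ?_ h0
      rw [div_pow, div_mul_eq_mul_div, le_div_iff₀ (by positivity)]
      nlinarith [(Nat.cast_nonneg k : (0:ℝ) ≤ k)]
  cases k with
  | zero => simp [bw, bp_zero]; norm_num
  | succ k =>
    have := key k
    push_cast
    nlinarith [sq_nonneg (bw (k+1))]

/-- lower bound for p_1 -/
lemma bp_one_sq (k : ℕ) : 1/16 ≤ bp 1 k ^ 2 * ((k:ℝ)+1)^3 := by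
  have := bw_sq k
  unfold bw at this
  nlinarith

lemma bp_lower_aux (k j : ℕ) :
    (j+1) * bp 1 k * (1 - j*(j+5)/(4*(k+2))) ≤ bp (j+1) k := by
  -- by induction on j, as long as the factor is nonneg
  have hb := bp_nonneg 1 k
  induction j with
  | zero => simp
  | succ j ih =>
    have h := bp_j (j+1) k
    push_cast at h ⊢
    have e1 : bp (j+2) k = (j+1+1)*(2*k+(j+1)) * bp (j+1) k / ((j+1) * (2*(k+(j+1)+1))) := by
      rw [← h]; field_simp; try rfl
    show _ ≤ bp (j+2) k
    rw [e1]
    have hk : (0:ℝ) ≤ k := Nat.cast_nonneg k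
    have hj : (0:ℝ) ≤ j := Nat.cast_nonneg j
    by_cases hneg : 1 - (j+1)*((j:ℝ)+1+5)/(4*(k+2)) ≤ 0
    · have : 0 ≤ bp (j+1) k := bp_nonneg _ _
      have h1 : (j+1+1) * bp 1 k * (1 - (j+1)*((j:ℝ)+1+5)/(4*(k+2))) ≤ 0 :=
        mul_nonpos_of_nonneg_of_nonpos (by positivity) hneg
      refine h1.trans (by positivity)
    · push Not at hneg
      have hx : (j+1+1)*(2*(k:ℝ)+(j+1)) * bp (j+1) k / ((j+1) * (2*(k+(j+1)+1)))
          = bp (j+1) k * ((j+1+1)/(j+1) * (1 - (j+3)/(2*(k+j+2)))) := by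
        field_simp; ring
      rw [hx]
      have hpos : 0 ≤ (((j:ℝ)+1+1)/(j+1) * (1 - (j+3)/(2*(k+j+2)))) := by
        apply mul_nonneg (by positivity)
        rw [sub_nonneg, div_le_one (by positivity)]; linarith
      refine le_trans ?_ (mul_le_mul_of_nonneg_right ih hpos)
      have hmain : (1 - (j+1)*((j:ℝ)+1+5)/(4*(k+2))) ≤
          (1 - j*(j+5)/(4*(k+2))) * (1 - (j+3)/(2*(k+j+2))) := by
        have a1 : ((j:ℝ)+3)/(2*(k+j+2)) ≤ (j+3)/(2*(k+2)) := by
          apply div_le_div_of_nonneg_left <;> linarith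
        have a2 : (j+1)*((j:ℝ)+1+5)/(4*(k+2)) = j*(j+5)/(4*(k+2)) + (j+3)/(2*(k+2)) := by
          field_simp; ring
        have a3 : 0 ≤ (j:ℝ)*(j+5)/(4*(k+2)) := by positivity
        have a4 : 0 ≤ ((j:ℝ)+3)/(2*(k+j+2)) := by positivity
        rw [a2]
        nlinarith [mul_nonneg a3 a4]
      calc _ ≤ (j+1+1) * bp 1 k * ((1 - j*(j+5)/(4*(k+2))) * (1 - (j+3)/(2*(k+j+2)))) :=
            mul_le_mul_of_nonneg_left hmain (by positivity)
        _ = _ := by field_simp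

lemma bp_lower (k j : ℕ) (hj : 1 ≤ j) (hjk : j^2 ≤ k ∨ j = 1) :
    (j:ℝ) * bp 1 k / 2 ≤ bp j k := by
  obtain ⟨i, rfl⟩ : ∃ i, j = i+1 := ⟨j-1, by omega⟩
  have hb := bp_nonneg 1 k
  rcases hjk with h | h
  · refine le_trans ?_ (bp_lower_aux k i)
    have h' : ((i:ℝ)+1)^2 ≤ k := by exact_mod_cast h
    have hi : (0:ℝ) ≤ i := Nat.cast_nonneg i
    have : 1/2 ≤ 1 - (i:ℝ)*(i+5)/(4*(k+2)) := by
      have : (i:ℝ)*(i+5)/(4*(k+2)) ≤ 1/2 := by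
        rw [div_le_iff₀ (by positivity)]; nlinarith [sq_nonneg ((i:ℝ)-1)]
      linarith
    push_cast
    calc ((i:ℝ)+1) * bp 1 k / 2 = ((i:ℝ)+1) * bp 1 k * (1/2) := by ring
      _ ≤ _ := mul_le_mul_of_nonneg_left this (by positivity)
  · obtain rfl : i = 0 := by omega
    simp; linarith

lemma bp_one_anti_aux (k N : ℕ) (hk : k ≤ N^2) : 1/16 ≤ bp 1 k * ((N:ℝ)+1)^3 := by
  have h := bp_one_sq k
  have hb := bp_nonneg 1 k
  have h1 : ((k:ℝ)+1) ≤ (N+1)^2 := by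
    have : (k:ℝ) ≤ N^2 := by exact_mod_cast hk
    nlinarith [(Nat.cast_nonneg N : (0:ℝ) ≤ N)]
  have h2 : ((k:ℝ)+1)^3 ≤ ((N+1)^2)^3 := by gcongr
  have h3 : 1/16 ≤ (bp 1 k * ((N:ℝ)+1)^3)^2 := by
    calc _ ≤ _ := h
      _ ≤ bp 1 k ^ 2 * ((N+1)^2)^3 := by gcongr
      _ = _ := by ring
  by_contra hc
  push Not at hc
  have : 0 ≤ bp 1 k * ((N:ℝ)+1)^3 := by positivity
  nlinarith

lemma sum_sq_lower (J : ℕ) : (J:ℝ)^3 / 3 ≤ ∑ j ∈ Finset.range (J+1), (j:ℝ)^2 := by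
  induction J with
  | zero => simp
  | succ J ih => rw [Finset.sum_range_succ]; push_cast; nlinarith [(Nat.cast_nonneg J : (0:ℝ) ≤ J)]

lemma bp_green_aux (N k l : ℕ) (hN : 1 ≤ N) (hk : k ≤ N^2) (hlk : l ≤ k) :
    1/ (24576 * ((N:ℝ)+1)^3) ≤ ∑ j ∈ Finset.range (N+1), bp j k * bp j l := by
  obtain ⟨J, hJ1, hJN, hJl, hlJ⟩ : ∃ J : ℕ, 1 ≤ J ∧ J ≤ N ∧ (∀ j ≤ J, j^2 ≤ l ∨ j ≤ 1) ∧
      l ≤ (2*J)^2 - 1 := by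
    refine ⟨max 1 (Nat.sqrt l), le_max_left _ _, max_le hN ?_, ?_, ?_⟩
    · calc Nat.sqrt l ≤ Nat.sqrt (N^2) := Nat.sqrt_le_sqrt (hlk.trans hk)
        _ = N := Nat.sqrt_eq' N
    · intro j hj
      rcases le_max_iff.1 hj with h | h
      · right; exact h
      · left; calc j^2 ≤ (Nat.sqrt l)^2 := by gcongr
          _ ≤ l := Nat.sqrt_le' l
    · have h := Nat.lt_succ_sqrt' l
      have : Nat.succ (Nat.sqrt l) ≤ 2 * max 1 (Nat.sqrt l) := by omega
      have h2 : (Nat.succ (Nat.sqrt l))^2 ≤ (2 * max 1 (Nat.sqrt l))^2 := by gcongr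
      omega
  have hlJ' : (l:ℝ) + 1 ≤ (2*J)^2 := by
    have : l + 1 ≤ (2*J)^2 := by
      have : 0 < (2*J)^2 := by positivity
      omega
    exact_mod_cast this
  have h1 : ∀ j ∈ Finset.range (J+1), (j:ℝ)^2 * (bp 1 k * bp 1 l / 4) ≤ bp j k * bp j l := by
    intro j hj
    have hjJ : j ≤ J := by simpa [Nat.lt_succ_iff] using hj
    rcases Nat.eq_zero_or_pos j with rfl | hpos
    · simp; exact mul_nonneg (bp_nonneg _ _) (bp_nonneg _ _)
    · have a := bp_lower k j hpos (by rcases hJl j hjJ with h | h <;> omega)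
      have b := bp_lower l j hpos (by rcases hJl j hjJ with h | h <;> omega)
      calc (j:ℝ)^2 * (bp 1 k * bp 1 l / 4) = ((j:ℝ) * bp 1 k / 2) * ((j:ℝ) * bp 1 l / 2) := by ring
        _ ≤ _ := mul_le_mul a b (by have := bp_nonneg 1 l; positivity) (bp_nonneg _ _)
  have h2 : ∑ j ∈ Finset.range (J+1), bp j k * bp j l ≤ ∑ j ∈ Finset.range (N+1), bp j k * bp j l := by
    apply Finset.sum_le_sum_of_subset_of_nonneg
    · intro x; simp; omega
    · intros; exact mul_nonneg (bp_nonneg _ _) (bp_nonneg _ _)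
  refine le_trans ?_ h2
  refine le_trans ?_ (Finset.sum_le_sum h1)
  rw [← Finset.sum_mul]
  have hk1 := bp_one_anti_aux k N hk
  have hl0 := bp_nonneg 1 l
  have hk0 := bp_nonneg 1 k
  -- J^3 bp 1 l ≥ 1/32
  have hl1 : 1/32 ≤ (J:ℝ)^3 * bp 1 l := by
    have h := bp_one_sq l
    have h2 : ((l:ℝ)+1)^3 ≤ ((2*J)^2)^3 := by gcongr
    have h3 : 1/16 ≤ (8 * (J^3 * bp 1 l))^2 := by
      calc _ ≤ _ := h
        _ ≤ bp 1 l ^ 2 * ((2*J)^2)^3 := by gcongr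
        _ = _ := by ring
    by_contra hc
    push Not at hc
    have : 0 ≤ (J:ℝ)^3 * bp 1 l := by positivity
    nlinarith
  calc _ ≤ (J:ℝ)^3/3 * (bp 1 k * bp 1 l/4) := by
        rw [div_le_iff₀ (by positivity)]
        have : (1/16) * (1/32) ≤ (bp 1 k * ((N:ℝ)+1)^3) * ((J:ℝ)^3 * bp 1 l) :=
          mul_le_mul hk1 hl1 (by norm_num) (by positivity)
        nlinarith
    _ ≤ _ := by
        apply mul_le_mul_of_nonneg_right (sum_sq_lower J) (by positivity)

lemma bp_green (N k l : ℕ) (hN : 1 ≤ N) (hk : k ≤ N^2) (hl : l ≤ N^2) :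
    1/ (24576 * ((N:ℝ)+1)^3) ≤ ∑ j ∈ Finset.range (N+1), bp j k * bp j l := by
  rcases le_total l k with h | h
  · exact bp_green_aux N k l hN hk h
  · simpa [mul_comm] using bp_green_aux N l k hN hl h

section AbstractOps
variable {E : Type*} [NormedAddCommGroup E] [NormedSpace ℝ E] [PartialOrder E]
  [IsOrderedAddMonoid E] [OrderClosedTopology E] [PosSMulMono ℝ E] [CompleteSpace E]

def PosOp {E : Type*} [NormedAddCommGroup E] [NormedSpace ℝ E] [PartialOrder E]
    (A : E →L[ℝ] E) : Prop := ∀ f, 0 ≤ f → 0 ≤ A f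

lemma PosOp.add {A B : E →L[ℝ] E} (hA : PosOp A) (hB : PosOp B) : PosOp (A + B) :=
  fun f hf => add_nonneg (hA f hf) (hB f hf)

lemma PosOp.mul {A B : E →L[ℝ] E} (hA : PosOp A) (hB : PosOp B) : PosOp (A * B) :=
  fun f hf => hA _ (hB f hf)

lemma PosOp.one : PosOp (1 : E →L[ℝ] E) := fun _ hf => hf

lemma PosOp.zero : PosOp (0 : E →L[ℝ] E) := fun _ _ => le_rfl

lemma PosOp.pow {A : E →L[ℝ] E} (hA : PosOp A) (n : ℕ) : PosOp (A ^ n) := by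
  induction n with
  | zero => simpa using PosOp.one
  | succ n ih => rw [pow_succ]; exact ih.mul hA

lemma PosOp.smul {A : E →L[ℝ] E} (hA : PosOp A) {c : ℝ} (hc : 0 ≤ c) : PosOp (c • A) :=
  fun f hf => smul_nonneg hc (hA f hf)

lemma PosOp.sum {ι : Type*} {s : Finset ι} {A : ι → E →L[ℝ] E} (hA : ∀ i ∈ s, PosOp (A i)) :
    PosOp (∑ i ∈ s, A i) := by
  classical
  induction s using Finset.induction_on with
  | empty => simpa using PosOp.zero
  | insert a s ha ih =>
    rw [Finset.sum_insert ha]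
    exact (hA a (by simp)).add (ih fun i hi => hA i (by simp [hi]))

/-- operator order -/
def OpLE {E : Type*} [NormedAddCommGroup E] [NormedSpace ℝ E] [PartialOrder E]
    (A B : E →L[ℝ] E) : Prop := PosOp (B - A)

lemma OpLE.trans {A B D : E →L[ℝ] E} (h1 : OpLE A B) (h2 : OpLE B D) : OpLE A D := by
  have := PosOp.add h1 h2
  unfold OpLE; convert this using 1; abel

lemma OpLE.refl (A : E →L[ℝ] E) : OpLE A A := by
  unfold OpLE; rw [sub_self]; exact PosOp.zero

lemma OpLE.smul {A B : E →L[ℝ] E} (h : OpLE A B) {c : ℝ} (hc : 0 ≤ c) : OpLE (c • A) (c • B) := by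
  unfold OpLE; rw [← smul_sub]; exact PosOp.smul h hc

lemma OpLE.smul_right {A : E →L[ℝ] E} (h : PosOp A) {c d : ℝ} (hc : c ≤ d) :
    OpLE (c • A) (d • A) := by
  unfold OpLE; rw [← sub_smul]; exact PosOp.smul h (sub_nonneg.2 hc)

lemma OpLE.sum {ι : Type*} {s : Finset ι} {A B : ι → E →L[ℝ] E} (hA : ∀ i ∈ s, OpLE (A i) (B i)) :
    OpLE (∑ i ∈ s, A i) (∑ i ∈ s, B i) := by
  unfold OpLE; rw [← Finset.sum_sub_distrib]; exact PosOp.sum hA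

lemma OpLE.mul {A B A' B' : E →L[ℝ] E} (h : OpLE A B) (h' : OpLE A' B') (hA : PosOp A)
    (hB' : PosOp B') : OpLE (A * A') (B * B') := by
  unfold OpLE
  have : B * B' - A * A' = (B - A) * B' + A * (B' - A') := by rw [sub_mul, mul_sub]; abel
  rw [this]
  exact (PosOp.mul h hB').add (PosOp.mul hA h')

lemma OpLE.apply {A B : E →L[ℝ] E} (h : OpLE A B) {f : E} (hf : 0 ≤ f) : A f ≤ B f :=
  sub_nonneg.1 (h f hf)

structure DOp {E : Type*} [NormedAddCommGroup E] [NormedSpace ℝ E] [PartialOrder E]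
    (C : Set E) (A : E →L[ℝ] E) : Prop where
  pos : PosOp A
  norm_le : ‖A‖ ≤ 1
  maps : ∀ f ∈ C, A f ∈ C

variable {C : Set E}

lemma DOp.one : DOp C (1 : E →L[ℝ] E) :=
  ⟨PosOp.one, ContinuousLinearMap.norm_id_le, fun _ hf => hf⟩

lemma DOp.mul {A B : E →L[ℝ] E} (hA : DOp C A) (hB : DOp C B) : DOp C (A * B) :=
  ⟨hA.pos.mul hB.pos, (norm_mul_le _ _).trans (mul_le_one₀ hA.norm_le (norm_nonneg _) hB.norm_le),
    fun f hf => hA.maps _ (hB.maps f hf)⟩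

lemma DOp.pow {A : E →L[ℝ] E} (hA : DOp C A) (n : ℕ) : DOp C (A ^ n) := by
  induction n with
  | zero => simpa using DOp.one
  | succ n ih => rw [pow_succ]; exact ih.mul hA

lemma DOp.sum {ι : Type*} (hC : Convex ℝ C) (h0 : (0:E) ∈ C) {s : Finset ι} {A : ι → E →L[ℝ] E}
    {a : ι → ℝ} (ha : ∀ i ∈ s, 0 ≤ a i)
    (hs : ∑ i ∈ s, a i ≤ 1) (hA : ∀ i ∈ s, DOp C (A i)) : DOp C (∑ i ∈ s, a i • A i) := by
  refine ⟨PosOp.sum fun i hi => (hA i hi).pos.smul (ha i hi), ?_, ?_⟩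
  · refine (norm_sum_le _ _).trans (le_trans (Finset.sum_le_sum fun i hi => ?_) hs)
    rw [norm_smul, Real.norm_of_nonneg (ha i hi)]
    exact mul_le_of_le_one_right (ha i hi) (hA i hi).norm_le
  · intro f hf
    have h := hC.sum_mem (t := Finset.insertNone s)
      (w := fun o : Option ι => o.elim (1 - ∑ i ∈ s, a i) a) (z := fun o : Option ι => o.elim 0 (fun i => A i f)) ?_ ?_ ?_
    · simpa [ContinuousLinearMap.sum_apply] using h
    · intro o ho
      cases o with
      | none => simpa using hs
      | some i => exact ha i (by simpa using ho)
    · simp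
    · intro o ho
      cases o with
      | none => simpa using h0
      | some i => exact (hA i (by simpa using ho)).maps f hf

lemma DOp.of_tendsto (hC : IsClosed C) {A : ℕ → E →L[ℝ] E} {B : E →L[ℝ] E}
    (h : Tendsto A atTop (𝓝 B)) (hA : ∀ n, DOp C (A n)) : DOp C B := by
  have h' : ∀ f, Tendsto (fun n => A n f) atTop (𝓝 (B f)) := fun f =>
    ((ContinuousLinearMap.apply ℝ E f).continuous.tendsto B).comp h
  exact ⟨fun f hf => ge_of_tendsto' (h' f) fun n => (hA n).pos f hf,
    le_of_tendsto' h.norm fun n => (hA n).norm_le,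
    fun f hf => hC.mem_of_tendsto (h' f) (Eventually.of_forall fun n => (hA n).maps f hf)⟩

noncomputable def vOp (T : E →L[ℝ] E) : E →L[ℝ] E := ∑' k, bp 1 k • T ^ k

lemma vOp_summable_norm {T : E →L[ℝ] E} (hT : DOp C T) : Summable fun k => ‖bp 1 k • T ^ k‖ := by
  refine Summable.of_nonneg_of_le (fun _ => norm_nonneg _) (fun k => ?_) bp_one_summable
  rw [norm_smul, Real.norm_of_nonneg (bp_nonneg 1 k)]
  exact mul_le_of_le_one_right (bp_nonneg 1 k) (hT.pow k).norm_le

lemma vOp_dop (hCc : IsClosed C) (hC : Convex ℝ C) (h0 : (0:E) ∈ C) {T : E →L[ℝ] E}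
    (hT : DOp C T) : DOp C (vOp T) := by
  have := (vOp_summable_norm hT).of_norm.hasSum.tendsto_sum_nat
  exact DOp.of_tendsto hCc this fun n =>
    DOp.sum hC h0 (fun i _ => bp_nonneg 1 i) (bp_one_sum_le n) fun i _ => hT.pow i

lemma vOp_commute {S T : E →L[ℝ] E} (h : Commute S T) : Commute S (vOp T) :=
  Commute.tsum_right _ fun k => (h.pow_right k).smul_right _

lemma vOp_eq {T : E →L[ℝ] E} (hT : DOp C T) :
    vOp T = (1/2 : ℝ) • (1 + T * vOp T ^ 2) := by
  have hs := vOp_summable_norm hT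
  have h1 : vOp T ^ 2 = ∑' n, (∑ ij ∈ Finset.HasAntidiagonal.antidiagonal n, bp 1 ij.1 * bp 1 ij.2) • T ^ n := by
    rw [pow_two]
    unfold vOp
    rw [tsum_mul_tsum_eq_tsum_sum_antidiagonal_of_summable_norm hs hs]
    refine tsum_congr fun n => ?_
    rw [Finset.sum_smul]
    refine Finset.sum_congr rfl fun ij hij => ?_
    rw [smul_mul_smul_comm, ← pow_add, Finset.HasAntidiagonal.mem_antidiagonal.1 hij]
  have h2 : ∀ n, (∑ ij ∈ Finset.HasAntidiagonal.antidiagonal n, bp 1 ij.1 * bp 1 ij.2) • T ^ n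
      = (2 * bp 1 (n+1)) • T ^ n := by
    intro n; rw [bp_one_conv]; ring_nf
  simp_rw [h2] at h1
  have hs2 : Summable fun n => (2 * bp 1 (n+1)) • T ^ n := by
    apply Summable.of_norm
    refine Summable.of_nonneg_of_le (fun _ => norm_nonneg _) (fun k => ?_)
      (((summable_nat_add_iff 1).2 bp_one_summable).mul_left 2)
    have := bp_nonneg 1 (k+1)
    rw [norm_smul, Real.norm_of_nonneg (by positivity)]
    exact mul_le_of_le_one_right (by positivity) (hT.pow k).norm_le
  have h3 : T * vOp T ^ 2 = ∑' n, (2 * bp 1 (n+1)) • T ^ (n+1) := by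
    rw [h1, ← hs2.tsum_mul_left]
    refine tsum_congr fun n => ?_
    rw [mul_smul_comm, pow_succ']
  rw [h3]
  have h4 : vOp T = bp 1 0 • T ^ 0 + ∑' n, bp 1 (n+1) • T ^ (n+1) := hs.of_norm.tsum_eq_zero_add
  rw [h4, bp_zero]
  have h5 : ∑' n, (2 * bp 1 (n+1)) • T ^ (n+1) = (2:ℝ) • ∑' n, bp 1 (n+1) • T ^ (n+1) := by
    rw [← tsum_const_smul'']
    simp_rw [mul_smul]
  rw [h5, smul_add, smul_smul]
  norm_num

lemma vOp_pow_rec {T : E →L[ℝ] E} (hT : DOp C T) (j : ℕ) :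
    vOp T ^ (j+1) = (1/2 : ℝ) • (vOp T ^ j + T * vOp T ^ (j+2)) := by
  rw [pow_succ']
  conv_lhs => enter [1]; rw [vOp_eq hT]
  rw [smul_mul_assoc, add_mul, one_mul, mul_assoc, ← pow_add, add_comm 2 j]

lemma vOp_lower (hCc : IsClosed C) (hC : Convex ℝ C) (h0 : (0:E) ∈ C) {T : E →L[ℝ] E}
    (hT : DOp C T) (K : ℕ) : ∀ j,
    OpLE (∑ k ∈ Finset.range K, bp j k • T ^ k) (vOp T ^ j) := by
  have hV := vOp_dop hCc hC h0 hT
  induction K with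
  | zero => intro j; simpa [OpLE] using hV.pos.pow j
  | succ K ih =>
    intro j
    induction j with
    | zero =>
      rw [Finset.sum_range_succ']
      simp [bp_one_zero_rec, bp_zero]
      exact OpLE.refl _
    | succ j ihj =>
      have h2 : OpLE (T * ∑ k ∈ Finset.range K, bp (j+2) k • T ^ k) (T * vOp T ^ (j+2)) :=
        OpLE.mul (OpLE.refl T) (ih (j+2)) hT.pos (hV.pos.pow _)
      have h3 : PosOp ((vOp T ^ j + T * vOp T ^ (j+2)) - (∑ k ∈ Finset.range (K+1), bp j k • T ^ k +
        T * ∑ k ∈ Finset.range K, bp (j+2) k • T ^ k)) := by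
        have := PosOp.add ihj h2
        convert this using 1; abel
      have h4 := h3.smul (c := 1/2) (by norm_num)
      unfold OpLE
      convert h4 using 1
      rw [vOp_pow_rec hT j, smul_sub]
      congr 1
      rw [Finset.sum_range_succ', Finset.sum_range_succ', Finset.mul_sum]
      have e1 : ∀ k, bp (j+1) (k+1) • T^(k+1) = (1/2:ℝ) • (bp j (k+1) • T^(k+1) + T * (bp (j+2) k • T^k)) := by
        intro k
        rw [bp_rec, mul_smul_comm, ← pow_succ', ← add_smul, smul_smul]
      simp_rw [e1]
      rw [← Finset.smul_sum, Finset.sum_add_distrib, bp_zero, bp_zero]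
      simp only [smul_add, pow_succ, smul_smul]
      rw [mul_comm (1/2:ℝ)]
      abel

/-- `B_N = (N+1)⁻¹ ∑_{j ≤ N} T^j`. -/
noncomputable def bAvg (N : ℕ) (T : E →L[ℝ] E) : E →L[ℝ] E :=
  ((N:ℝ)+1)⁻¹ • ∑ j ∈ Finset.range (N+1), T ^ j

lemma bAvg_pos {T : E →L[ℝ] E} (hT : PosOp T) (N : ℕ) : PosOp (bAvg N T) :=
  PosOp.smul (PosOp.sum fun i _ => hT.pow i) (by positivity)

lemma pair_lemma (hCc : IsClosed C) (hC : Convex ℝ C) (h0 : (0:E) ∈ C) {S T : E →L[ℝ] E}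
    (hS : DOp C S) (hT : DOp C T) (hST : Commute S T) (N : ℕ) :
    OpLE (bAvg (N^2) S * bAvg (N^2) T) ((393216 : ℝ) • bAvg N (vOp S * vOp T)) := by
  have hVS := vOp_dop hCc hC h0 hS
  have hVT := vOp_dop hCc hC h0 hT
  have hcomm : Commute (vOp S) (vOp T) := (vOp_commute (vOp_commute hST).symm).symm
  rcases Nat.eq_zero_or_pos N with rfl | hN
  · simp [bAvg]
    have := OpLE.smul_right (PosOp.one (E := E)) (c := 1) (d := 393216) (by norm_num)
    rwa [one_smul] at this
  have h1 : ∀ j, OpLE (∑ k ∈ Finset.range (N^2+1), ∑ l ∈ Finset.range (N^2+1),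
      (bp j k * bp j l) • (S^k * T^l)) ((vOp S * vOp T)^j) := by
    intro j
    rw [hcomm.mul_pow]
    have := OpLE.mul (vOp_lower hCc hC h0 hS (N^2+1) j) (vOp_lower hCc hC h0 hT (N^2+1) j)
      (PosOp.sum fun i _ => (hS.pos.pow i).smul (bp_nonneg _ _)) (hVT.pos.pow j)
    rw [Finset.sum_mul_sum] at this
    simpa only [smul_mul_smul_comm] using this
  have h2 := OpLE.sum (E := E) (s := Finset.range (N+1)) (fun j _ => h1 j)
  have h3 : OpLE (∑ k ∈ Finset.range (N^2+1), ∑ l ∈ Finset.range (N^2+1),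
      (1/ (24576 * ((N:ℝ)+1)^3)) • (S^k * T^l)) (∑ j ∈ Finset.range (N+1), ∑ k ∈ Finset.range (N^2+1), ∑ l ∈ Finset.range (N^2+1),
      (bp j k * bp j l) • (S^k * T^l)) := by
    have e : ∑ j ∈ Finset.range (N+1), ∑ k ∈ Finset.range (N^2+1), ∑ l ∈ Finset.range (N^2+1),
        (bp j k * bp j l) • (S^k * T^l) = ∑ k ∈ Finset.range (N^2+1), ∑ l ∈ Finset.range (N^2+1),
        (∑ j ∈ Finset.range (N+1), bp j k * bp j l) • (S^k * T^l) := by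
      rw [Finset.sum_comm]
      refine Finset.sum_congr rfl fun k _ => ?_
      rw [Finset.sum_comm]
      refine Finset.sum_congr rfl fun l _ => ?_
      rw [Finset.sum_smul]
    rw [e]
    refine OpLE.sum (E := E) fun k hk => ?_
    refine OpLE.sum (E := E) fun l hl => ?_
    refine OpLE.smul_right ((hS.pos.pow k).mul (hT.pos.pow l)) (bp_green N k l hN ?_ ?_)
    · simpa [Nat.lt_succ_iff] using hk
    · simpa [Nat.lt_succ_iff] using hl
  have h4 := (h3.trans h2).smul (c := 393216 * ((N:ℝ)+1)⁻¹) (by positivity)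
  have h5 : (393216 : ℝ) • bAvg N (vOp S * vOp T) =
      (393216 * ((N:ℝ)+1)⁻¹) • ∑ j ∈ Finset.range (N+1), (vOp S * vOp T)^j := by
    rw [bAvg, smul_smul]
  rw [h5]
  refine OpLE.trans ?_ h4
  simp_rw [← Finset.smul_sum]
  rw [smul_smul, bAvg, bAvg, smul_mul_smul_comm, Finset.sum_mul_sum]
  refine OpLE.smul_right (PosOp.sum fun k _ => PosOp.sum fun l _ => (hS.pos.pow k).mul (hT.pos.pow l)) ?_
  push_cast
  have e : 393216 * ((N:ℝ)+1)⁻¹ * (1/ (24576 * ((N:ℝ)+1)^3)) = 16 / (N+1)^4 := by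
    field_simp; norm_num
  rw [e, ← mul_inv, inv_eq_one_div, div_le_div_iff₀ (by positivity) (by positivity)]
  have : ((N:ℝ)+1)^2 ≤ 2 * (N^2+1) := by nlinarith [sq_nonneg ((N:ℝ)-1)]
  nlinarith [sq_nonneg ((N:ℝ)+1)]

lemma list_lemma (hCc : IsClosed C) (hC : Convex ℝ C) (h0 : (0:E) ∈ C) (m : ℕ) :
    ∀ l : List (E →L[ℝ] E), l.length ≤ 2^m → (∀ A ∈ l, DOp C A) →
      (∀ A ∈ l, ∀ B ∈ l, Commute A B) →
      ∃ U : E →L[ℝ] E, DOp C U ∧ (∀ S : E →L[ℝ] E, (∀ A ∈ l, Commute S A) → Commute S U) ∧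
        ∃ c : ℝ, 0 < c ∧ ∀ M : ℕ, OpLE (l.map (bAvg (M^(2^m)))).prod (c • bAvg M U) := by
  induction m with
  | zero =>
    intro l hl hD hc
    match l, hl with
    | [], _ =>
      refine ⟨1, DOp.one, fun S _ => Commute.one_right S, 1, one_pos, fun M => ?_⟩
      have : bAvg M (1 : E →L[ℝ] E) = 1 := by
        simp [bAvg, ← Nat.cast_smul_eq_nsmul ℝ, smul_smul]
        rw [inv_mul_cancel₀ (by positivity), one_smul]
      rw [this]; simpa using OpLE.refl _
    | [A], _ =>
      refine ⟨A, hD A (by simp), fun S h => h A (by simp), 1, one_pos, fun M => ?_⟩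
      simpa using OpLE.refl _
    | A :: B :: l, h => simp at h
  | succ m ih =>
    intro l hl hD hc
    set l1 := l.take (2^m) with hl1
    set l2 := l.drop (2^m) with hl2
    have m1 : ∀ A ∈ l1, A ∈ l := fun A h => List.mem_of_mem_take h
    have m2 : ∀ A ∈ l2, A ∈ l := fun A h => List.mem_of_mem_drop h
    obtain ⟨U1, d1, k1, c1, p1, q1⟩ := ih l1 (by simp [hl1]) (fun A h => hD A (m1 A h))
      (fun A h B h' => hc A (m1 A h) B (m1 B h'))
    obtain ⟨U2, d2, k2, c2, p2, q2⟩ := ih l2 (by simp [hl2]; rw [pow_succ] at hl; omega) (fun A h => hD A (m2 A h))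
      (fun A h B h' => hc A (m2 A h) B (m2 B h'))
    have hU : Commute U1 U2 := k2 _ fun A hA => (k1 A fun B hB => hc A (m2 A hA) B (m1 B hB)).symm
    refine ⟨vOp U1 * vOp U2, (vOp_dop hCc hC h0 d1).mul (vOp_dop hCc hC h0 d2), ?_,
      c1 * c2 * 393216, by positivity, ?_⟩
    · intro S hS
      exact (vOp_commute (k1 S fun A hA => hS A (m1 A hA))).mul_right
        (vOp_commute (k2 S fun A hA => hS A (m2 A hA)))
    · intro M
      have e : l.map (bAvg (M^(2^(m+1)))) = l1.map (bAvg ((M^2)^(2^m))) ++ l2.map (bAvg ((M^2)^(2^m))) := by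
        rw [← List.map_append, List.take_append_drop, ← pow_mul, pow_succ 2 m, mul_comm 2]
      rw [e, List.prod_append]
      have hp : ∀ l' : List (E →L[ℝ] E), (∀ A ∈ l', PosOp A) → PosOp l'.prod := by
        intro l'
        induction l' with
        | nil => intro _; simpa using PosOp.one
        | cons a l' ih => intro h; rw [List.prod_cons]; exact (h a (by simp)).mul (ih fun A hA => h A (by simp [hA]))
      have := OpLE.mul (q1 (M^2)) (q2 (M^2)) (hp _ (by
        intro A hA
        obtain ⟨B, hB, rfl⟩ := List.mem_map.1 hA
        exact bAvg_pos (hD B (m1 B hB)).pos _)) ((bAvg_pos d2.pos _).smul p2.le)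
      refine this.trans ?_
      rw [smul_mul_smul_comm, mul_smul (c1 * c2)]
      exact (pair_lemma hCc hC h0 d1 d2 hU M).smul (by positivity)

end AbstractOps

instance lpPosSMulMono {μ : Measure Ω} {p : ℝ≥0∞} : PosSMulMono ℝ (Lp ℝ p μ) where
  smul_le_smul_of_nonneg_left := by
    intro c hc f g hfg
    rw [← Lp.coeFn_le] at hfg ⊢
    filter_upwards [hfg, Lp.coeFn_smul c f, Lp.coeFn_smul c g] with ω h h1 h2
    rw [h1, h2]
    exact mul_le_mul_of_nonneg_left h hc

lemma memSum_of_one {μ : Measure Ω} {f : Ω →ₘ[μ] ℝ} (hf : eLpNorm f 1 μ ≠ ∞) : MemL1pLinf μ f :=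
  ⟨f, 0, hf, by rw [eLpNorm_congr_ae AEEqFun.coeFn_zero]; simp, by simp⟩

lemma memSum_of_top {μ : Measure Ω} {f : Ω →ₘ[μ] ℝ} (hf : eLpNorm f ⊤ μ ≠ ∞) : MemL1pLinf μ f :=
  ⟨0, f, by rw [eLpNorm_congr_ae AEEqFun.coeFn_zero]; simp, hf, by simp⟩

noncomputable def opLp {μ : Measure Ω} {p : ℝ≥0∞} [Fact (1 ≤ p)] {T : (Ω →ₘ[μ] ℝ) → (Ω →ₘ[μ] ℝ)}
    (hT : IsPosDS μ T) (hm : ∀ f : Lp ℝ p μ, MemL1pLinf μ f.1)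
    (hn : ∀ f : Lp ℝ p μ, eLpNorm (T f.1) p μ ≤ eLpNorm f.1 p μ) : Lp ℝ p μ →L[ℝ] Lp ℝ p μ :=
  LinearMap.mkContinuous
    { toFun := fun f => ⟨T f.1, Lp.mem_Lp_iff_eLpNorm_lt_top.2 ((hn f).trans_lt (Lp.eLpNorm_lt_top f))⟩
      map_add' := fun f g => Subtype.ext (hT.map_add _ _ (hm f) (hm g))
      map_smul' := fun c f => Subtype.ext (hT.map_smul c _ (hm f)) } 1
    (fun f => by
      rw [one_mul, Lp.norm_def, Lp.norm_def]
      exact ENNReal.toReal_mono (Lp.eLpNorm_ne_top f) (hn f))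

lemma opLp_coe {μ : Measure Ω} {p : ℝ≥0∞} [Fact (1 ≤ p)] {T : (Ω →ₘ[μ] ℝ) → (Ω →ₘ[μ] ℝ)}
    (hT : IsPosDS μ T) (hm : ∀ f : Lp ℝ p μ, MemL1pLinf μ f.1)
    (hn : ∀ f : Lp ℝ p μ, eLpNorm (T f.1) p μ ≤ eLpNorm f.1 p μ) (f : Lp ℝ p μ) :
    (opLp hT hm hn f).1 = T f.1 := rfl

lemma opLp_norm {μ : Measure Ω} {p : ℝ≥0∞} [Fact (1 ≤ p)] {T : (Ω →ₘ[μ] ℝ) → (Ω →ₘ[μ] ℝ)}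
    (hT : IsPosDS μ T) (hm : ∀ f : Lp ℝ p μ, MemL1pLinf μ f.1)
    (hn : ∀ f : Lp ℝ p μ, eLpNorm (T f.1) p μ ≤ eLpNorm f.1 p μ) : ‖opLp hT hm hn‖ ≤ 1 :=
  LinearMap.mkContinuous_norm_le _ zero_le_one _

lemma memSum_L1 {μ : Measure Ω} (f : Lp ℝ 1 μ) : MemL1pLinf μ f.1 :=
  memSum_of_one (Lp.eLpNorm_ne_top f)

noncomputable def opL1 {μ : Measure Ω} {T : (Ω →ₘ[μ] ℝ) → (Ω →ₘ[μ] ℝ)}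
    (hT : IsPosDS μ T) : Lp ℝ 1 μ →L[ℝ] Lp ℝ 1 μ :=
  opLp hT memSum_L1 (fun f => hT.norm_one _ (memSum_L1 f))

lemma opL1_coe {μ : Measure Ω} {T : (Ω →ₘ[μ] ℝ) → (Ω →ₘ[μ] ℝ)}
    (hT : IsPosDS μ T) (f : Lp ℝ 1 μ) : (opL1 hT f).1 = T f.1 := rfl

def leOne (μ : Measure Ω) {p : ℝ≥0∞} : Set (Lp ℝ p μ) := {f | ∀ᵐ ω ∂μ, f ω ≤ 1}

lemma leOne_zero {μ : Measure Ω} {p : ℝ≥0∞} : (0 : Lp ℝ p μ) ∈ leOne μ := by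
  filter_upwards [Lp.coeFn_zero ℝ p μ] with ω h
  rw [h]; simp

lemma leOne_convex {μ : Measure Ω} {p : ℝ≥0∞} [Fact (1 ≤ p)] : Convex ℝ (leOne μ (p := p)) := by
  intro f hf g hg a b ha hb hab
  filter_upwards [hf, hg, Lp.coeFn_add (a • f) (b • g), Lp.coeFn_smul a f, Lp.coeFn_smul b g]
    with ω h1 h2 h3 h4 h5
  rw [h3, Pi.add_apply, h4, h5]
  simp only [Pi.smul_apply, smul_eq_mul]
  nlinarith

lemma leOne_closed {μ : Measure Ω} {p : ℝ≥0∞} [Fact (1 ≤ p)] : IsClosed (leOne μ (p := p)) := by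
  refine IsSeqClosed.isClosed fun u f hu hf => ?_
  obtain ⟨ns, -, h⟩ := (tendstoInMeasure_of_tendsto_Lp hf).exists_seq_tendsto_ae
  have := ae_all_iff.2 fun i => hu (ns i)
  filter_upwards [h, this] with ω h1 h2
  exact le_of_tendsto' h1 h2

lemma opLp_dop {μ : Measure Ω} {p : ℝ≥0∞} [Fact (1 ≤ p)] {T : (Ω →ₘ[μ] ℝ) → (Ω →ₘ[μ] ℝ)}
    (hT : IsPosDS μ T) (hm : ∀ f : Lp ℝ p μ, MemL1pLinf μ f.1)
    (hn : ∀ f : Lp ℝ p μ, eLpNorm (T f.1) p μ ≤ eLpNorm f.1 p μ) : DOp (leOne μ) (opLp hT hm hn) := by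
  have hpos : PosOp (opLp hT hm hn) := by
    intro f hf
    exact hT.map_pos f.1 (hm f) hf
  refine ⟨hpos, opLp_norm _ _ _, ?_⟩
  intro f hf
  have h1 : opLp hT hm hn f ≤ opLp hT hm hn (f ⊔ 0) := by
    have : 0 ≤ opLp hT hm hn (f ⊔ 0 - f) := hpos _ (sub_nonneg.2 le_sup_left)
    rw [map_sub] at this
    exact sub_nonneg.1 this
  have h2 : eLpNorm (f ⊔ 0 : Lp ℝ p μ) ⊤ μ ≤ 1 := by
    rw [eLpNorm_exponent_top]
    refine eLpNormEssSup_le_of_ae_enorm_bound ?_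
    filter_upwards [hf, Lp.coeFn_sup f 0, Lp.coeFn_zero ℝ p μ] with ω a b c
    rw [b, Pi.sup_apply, c, Real.enorm_eq_ofReal (by simp)]
    simpa using a
  have h3 := (hT.norm_top _ (hm (f ⊔ 0))).trans h2
  rw [eLpNorm_exponent_top] at h3
  have h4 : ∀ᵐ ω ∂μ, ‖(opLp hT hm hn (f ⊔ 0)) ω‖ₑ ≤ 1 := by
    filter_upwards [ae_le_eLpNormEssSup (f := (T (f ⊔ 0 : Lp ℝ p μ).1)) (μ := μ)] with ω h
    exact h.trans h3
  rw [← Lp.coeFn_le] at h1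
  filter_upwards [h1, h4] with ω a b
  refine a.trans ((le_abs_self _).trans ?_)
  rw [← Real.norm_eq_abs]
  rw [← ofReal_norm_eq_enorm] at b
  simpa using b

lemma opL1_dop {μ : Measure Ω} {T : (Ω →ₘ[μ] ℝ) → (Ω →ₘ[μ] ℝ)}
    (hT : IsPosDS μ T) : DOp (leOne μ) (opL1 hT) := opLp_dop _ _ _

lemma DOp.maps_le {μ : Measure Ω} {p : ℝ≥0∞} [Fact (1 ≤ p)] {A : Lp ℝ p μ →L[ℝ] Lp ℝ p μ} (hA : DOp (leOne μ) A)
    {c : ℝ} (hc : 0 < c) {f : Lp ℝ p μ} (hf : ∀ᵐ ω ∂μ, f ω ≤ c) : ∀ᵐ ω ∂μ, A f ω ≤ c := by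
  have h : c⁻¹ • f ∈ leOne μ := by
    filter_upwards [hf, Lp.coeFn_smul c⁻¹ f] with ω h1 h2
    rw [h2, Pi.smul_apply, smul_eq_mul, inv_mul_le_iff₀ hc]; simpa using h1
  have h' := hA.maps _ h
  rw [map_smul] at h'
  filter_upwards [h', Lp.coeFn_smul c⁻¹ (A f)] with ω h1 h2
  rw [h2, Pi.smul_apply, smul_eq_mul, inv_mul_le_iff₀ hc] at h1; simpa using h1

lemma DOp.maps_abs_le {μ : Measure Ω} {p : ℝ≥0∞} [Fact (1 ≤ p)] {A : Lp ℝ p μ →L[ℝ] Lp ℝ p μ} (hA : DOp (leOne μ) A)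
    {c : ℝ} (hc : 0 < c) {f : Lp ℝ p μ} (hf : ∀ᵐ ω ∂μ, |f ω| ≤ c) : ∀ᵐ ω ∂μ, |A f ω| ≤ c := by
  have h1 := hA.maps_le hc (hf.mono fun ω h => (abs_le.1 h).2)
  have h2 := hA.maps_le (f := -f) hc (by
    filter_upwards [hf, Lp.coeFn_neg f] with ω a b
    rw [b, Pi.neg_apply]; linarith [(abs_le.1 a).1])
  rw [map_neg] at h2
  filter_upwards [h1, h2, Lp.coeFn_neg (A f)] with ω a b c
  rw [c, Pi.neg_apply] at b
  exact abs_le.2 ⟨by linarith, a⟩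

lemma PosOp.mono {μ : Measure Ω} {p : ℝ≥0∞} [Fact (1 ≤ p)] {A : Lp ℝ p μ →L[ℝ] Lp ℝ p μ} (hA : PosOp A) {f g : Lp ℝ p μ}
    (h : f ≤ g) : A f ≤ A g := by
  have := hA (g - f) (sub_nonneg.2 h)
  rw [map_sub] at this
  exact sub_nonneg.1 this

lemma PosOp.abs_le {μ : Measure Ω} {p : ℝ≥0∞} [Fact (1 ≤ p)] {A : Lp ℝ p μ →L[ℝ] Lp ℝ p μ} (hA : PosOp A) (f : Lp ℝ p μ) :
    |A f| ≤ A |f| := by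
  refine abs_le'.2 ⟨hA.mono (le_abs_self f), ?_⟩
  rw [← map_neg]
  exact hA.mono (neg_le_abs f)

/-- Garsia's sequence. -/
noncomputable def gars {μ : Measure Ω} (U : Lp ℝ 1 μ →L[ℝ] Lp ℝ 1 μ) (g : Lp ℝ 1 μ) : ℕ → Lp ℝ 1 μ
  | 0 => 0
  | n+1 => (g + U (gars U g n)) ⊔ 0

lemma gars_nonneg {μ : Measure Ω} (U : Lp ℝ 1 μ →L[ℝ] Lp ℝ 1 μ) (g : Lp ℝ 1 μ) (n : ℕ) :
    0 ≤ gars U g n := by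
  cases n with
  | zero => exact le_rfl
  | succ n => exact le_sup_right

lemma gars_mono {μ : Measure Ω} {U : Lp ℝ 1 μ →L[ℝ] Lp ℝ 1 μ} (hU : PosOp U) (g : Lp ℝ 1 μ) :
    Monotone (gars U g) := by
  refine monotone_nat_of_le_succ fun n => ?_
  induction n with
  | zero => exact gars_nonneg U g 1
  | succ n ih => exact sup_le_sup_right (add_le_add_right (hU.mono ih) g) 0

lemma gars_sum {μ : Measure Ω} {U : Lp ℝ 1 μ →L[ℝ] Lp ℝ 1 μ} (hU : PosOp U) (g : Lp ℝ 1 μ) (n : ℕ) :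
    ∑ j ∈ Finset.range n, (U ^ j) g ≤ gars U g n := by
  induction n with
  | zero => simp [gars]
  | succ n ih =>
    refine le_trans ?_ (le_sup_left (b := (0 : Lp ℝ 1 μ)))
    have : ∑ j ∈ Finset.range (n+1), (U ^ j) g = g + U (∑ j ∈ Finset.range n, (U ^ j) g) := by
      rw [Finset.sum_range_succ', map_sum, add_comm]
      simp [pow_succ']
    rw [this]
    exact add_le_add_right (hU.mono ih) g

lemma hopf {μ : Measure Ω} {U : Lp ℝ 1 μ →L[ℝ] Lp ℝ 1 μ} (hU : DOp (leOne μ) U)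
    {f : Lp ℝ 1 μ} (hf : 0 ≤ f) {lam : ℝ} (hl : 0 < lam) {B : Set Ω} (hB : MeasurableSet B)
    (hμB : μ B ≠ ∞) (n : ℕ)
    (hBn : ∀ᵐ ω ∂μ, ω ∈ B → ∃ m ≤ n, lam < bAvg m U f ω) :
    lam * μ.real B ≤ ‖f‖ := by
  set b : Lp ℝ 1 μ := indicatorConstLp 1 hB hμB (1:ℝ) with hb
  set g := f - lam • b with hg
  set H := gars U g (n+1) with hH
  have hbC : b ∈ leOne μ := by
    filter_upwards [indicatorConstLp_coeFn (p := 1) (hs := hB) (hμs := hμB) (c := (1:ℝ))] with ω h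
    rw [h]; by_cases hω : ω ∈ B <;> simp [hω]
  -- on B, H > 0
  have hpos : ∀ᵐ ω ∂μ, ω ∈ B → 0 < H ω := by
    have key : ∀ m ≤ n, ∀ᵐ ω ∂μ, lam < bAvg m U f ω → 0 < H ω := by
      intro m hm
      have h1 : ∑ j ∈ Finset.range (m+1), (U ^ j) g ≤ H :=
        (gars_sum hU.pos g (m+1)).trans (gars_mono hU.pos g (by omega))
      have h2 : ∑ j ∈ Finset.range (m+1), (U ^ j) g =
          ((m:ℝ)+1) • bAvg m U f - (((m:ℝ)+1) * lam) • bAvg m U b := by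
        simp only [hg, map_sub, map_smul, Finset.sum_sub_distrib, bAvg]
        simp only [ContinuousLinearMap.smul_apply, ContinuousLinearMap.sum_apply]
        rw [smul_smul, smul_smul, mul_inv_cancel₀ (by positivity), one_smul, ← Finset.smul_sum]
        congr 2
        field_simp
      have h3 : bAvg m U b ∈ leOne μ (p := 1) := by
        have : DOp (leOne μ (p := 1)) (bAvg m U) := by
          unfold bAvg
          rw [Finset.smul_sum]
          refine DOp.sum (E := Lp ℝ 1 μ) (C := leOne μ (p := 1)) leOne_convex leOne_zero (fun _ _ => by positivity) ?_ (fun j _ => hU.pow j)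
          simp
          rw [mul_inv_cancel₀ (by positivity)]
        exact this.maps b hbC
      rw [h2, ← Lp.coeFn_le] at h1
      filter_upwards [h1, h3, Lp.coeFn_sub (((m:ℝ)+1) • bAvg m U f) ((((m:ℝ)+1) * lam) • bAvg m U b),
        Lp.coeFn_smul ((m:ℝ)+1) (bAvg m U f), Lp.coeFn_smul (((m:ℝ)+1) * lam) (bAvg m U b)]
        with ω a1 a2 a3 a4 a5 a6
      rw [a3, Pi.sub_apply, a4, a5] at a1
      simp only [Pi.smul_apply, smul_eq_mul] at a1
      refine lt_of_lt_of_le ?_ a1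
      have : (0:ℝ) < (m:ℝ)+1 := by positivity
      have h7 : lam * bAvg m U b ω ≤ lam := mul_le_of_le_one_right hl.le a2
      have : 0 < ((m:ℝ)+1) * (bAvg m U f ω - lam * bAvg m U b ω) := mul_pos this (by linarith)
      linarith
    have key' := ae_all_iff.2 fun m => ae_all_iff.2 (key m)
    filter_upwards [hBn, key'] with ω h1 h2 hω
    obtain ⟨m, hm, h⟩ := h1 hω
    exact h2 m hm h
  have hint : ∀ u : Lp ℝ 1 μ, Integrable u μ := fun u => L1.integrable_coeFn u
  have hHn : 0 ≤ H := gars_nonneg _ _ _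
  have hle : ∀ᵐ ω ∂μ, H ω - U H ω ≤ f ω - lam * b ω := by
    have e1 : U (gars U g n) ≤ U H := hU.pos.mono (gars_mono hU.pos g (by omega))
    have e2 : 0 ≤ U H := hU.pos _ hHn
    rw [← Lp.coeFn_le] at e1
    rw [← Lp.coeFn_nonneg] at e2 hf
    filter_upwards [hpos, e1, e2, hf, Lp.coeFn_sup (g + U (gars U g n)) 0, Lp.coeFn_zero ℝ 1 μ,
      Lp.coeFn_add g (U (gars U g n)), Lp.coeFn_sub f (lam • b), Lp.coeFn_smul lam b,
      indicatorConstLp_coeFn (p := 1) (hs := hB) (hμs := hμB) (c := (1:ℝ))] with ω a1 a2 a3 a4 a5 a6 a7 a8 a9 a10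
    have hHω : H ω = max (f ω - lam * b ω + U (gars U g n) ω) 0 := by
      have : H ω = ((g + U (gars U g n)) ⊔ 0 : Lp ℝ 1 μ) ω := rfl
      rw [this, a5, Pi.sup_apply, a6, a7, Pi.add_apply, hg, a8, Pi.sub_apply, a9]
      rfl
    simp only [Pi.zero_apply] at a3 a4
    by_cases hp : 0 < H ω
    · rcases max_choice (f ω - lam * b ω + U (gars U g n) ω) 0 with hm | hm
      · rw [hHω, hm]; linarith
      · rw [hHω, hm] at hp; exact absurd hp (lt_irrefl _)
    · have hB' : ω ∉ B := fun h => hp (a1 h)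
      have hbω : b ω = 0 := by rw [hb, a10]; simp [hB']
      rw [hbω]; linarith [not_lt.1 hp]
  have hI := integral_mono_ae ((hint H).sub (hint (U H))) ((hint f).sub ((hint b).const_mul lam)) hle
  simp only [Pi.sub_apply] at hI
  rw [integral_sub (hint _) (hint _), integral_sub (hint _) ((hint _).const_mul _), integral_const_mul] at hI
  have hnorm : ∀ u : Lp ℝ 1 μ, 0 ≤ u → ∫ ω, u ω ∂μ = ‖u‖ := by
    intro u hu
    rw [L1.norm_eq_integral_norm]
    refine integral_congr_ae ?_
    rw [← Lp.coeFn_nonneg] at hu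
    filter_upwards [hu] with ω h
    rw [Real.norm_of_nonneg h]
  have hbI : ∫ ω, b ω ∂μ = μ.real B := by
    rw [hb, integral_indicatorConstLp hB hμB]; simp
  rw [hnorm H hHn, hnorm _ (hU.pos _ hHn), hnorm f hf, hbI] at hI
  have : ‖U H‖ ≤ ‖H‖ := by simpa using U.le_of_opNorm_le hU.norm_le H
  linarith

lemma weak_one {μ : Measure Ω} {U : Lp ℝ 1 μ →L[ℝ] Lp ℝ 1 μ} (hU : DOp (leOne μ) U)
    {f : Lp ℝ 1 μ} (hf : 0 ≤ f) {lam : ℝ} (hl : 0 < lam) :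
    μ {ω | ∃ m, lam < bAvg m U f ω} ≤ ENNReal.ofReal (‖f‖ / lam) := by
  set S : ℕ → Set Ω := fun n => ⋃ m ∈ Finset.range (n+1), {ω | lam < bAvg m U f ω} with hS
  have hSm : ∀ n, MeasurableSet (S n) := fun n => Finset.measurableSet_biUnion _ fun m _ =>
    measurableSet_lt measurable_const (Lp.stronglyMeasurable _).measurable
  have hSf : ∀ n, μ (S n) ≠ ∞ := fun n => by
    refine ((measure_biUnion_finset_le _ _).trans_lt ?_).ne
    refine ENNReal.sum_lt_top.2 fun m _ => ?_
    exact (L1.integrable_coeFn (bAvg m U f)).measure_gt_lt_top hl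
  have hb : ∀ n, μ (S n) ≤ ENNReal.ofReal (‖f‖ / lam) := by
    intro n
    have := hopf hU hf hl (hSm n) (hSf n) n (Eventually.of_forall fun ω hω => by
      simp only [hS, mem_iUnion] at hω
      obtain ⟨m, hm, h⟩ := hω
      exact ⟨m, by simpa [Nat.lt_succ_iff] using hm, h⟩)
    rw [← ENNReal.ofReal_toReal (hSf n)]
    refine ENNReal.ofReal_le_ofReal ?_
    rw [le_div_iff₀ hl, mul_comm]; exact this
  have hU' : {ω | ∃ m, lam < bAvg m U f ω} = ⋃ n, S n := by
    ext ω
    simp only [hS, mem_setOf_eq, mem_iUnion]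
    constructor
    · rintro ⟨m, h⟩; exact ⟨m, m, by simp, h⟩
    · rintro ⟨n, m, _, h⟩; exact ⟨m, h⟩
  rw [hU', Monotone.measure_iUnion]
  · exact iSup_le hb
  · intro a b hab
    refine biUnion_subset_biUnion_left ?_
    intro x; simp; omega

lemma memSum_L2 {μ : Measure Ω} {f : Ω →ₘ[μ] ℝ} (hf : MemLp f 2 μ) : MemL1pLinf μ f := by
  set s : Set Ω := {ω | 1 < |f ω|} with hs
  have hsm : MeasurableSet s := measurableSet_lt measurable_const (by fun_prop)
  have m1 : AEStronglyMeasurable (s.indicator f) μ := f.aestronglyMeasurable.indicator hsm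
  have m2 : AEStronglyMeasurable (sᶜ.indicator f) μ := f.aestronglyMeasurable.indicator hsm.compl
  refine ⟨AEEqFun.mk _ m1, AEEqFun.mk _ m2, ?_, ?_, ?_⟩
  · rw [eLpNorm_congr_ae (AEEqFun.coeFn_mk _ m1)]
    refine ((memLp_one_iff_integrable.2 (hf.integrable_sq.mono' m1 ?_))).eLpNorm_ne_top
    refine ae_of_all _ fun ω => ?_
    by_cases h : ω ∈ s
    · rw [indicator_of_mem h, Real.norm_eq_abs, ← sq_abs]
      have : 1 < |f ω| := h
      nlinarith
    · rw [indicator_of_notMem h]; simpa using sq_nonneg _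
  · rw [eLpNorm_congr_ae (AEEqFun.coeFn_mk _ m2)]
    refine (memLp_top_of_bound m2 1 (ae_of_all _ fun ω => ?_)).eLpNorm_ne_top
    by_cases h : ω ∈ s
    · rw [indicator_of_notMem (by simpa using h)]; simp
    · rw [indicator_of_mem (by simpa using h)]
      exact not_lt.1 h
  · refine AEEqFun.ext ?_
    filter_upwards [AEEqFun.coeFn_mk _ m1, AEEqFun.coeFn_mk _ m2,
      AEEqFun.coeFn_add (AEEqFun.mk _ m1) (AEEqFun.mk _ m2)] with ω h1 h2 h3
    rw [h3, Pi.add_apply, h1, h2]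
    exact (congrFun (indicator_self_add_compl s f) ω).symm

lemma l2_contr {μ : Measure Ω} {T : (Ω →ₘ[μ] ℝ) → (Ω →ₘ[μ] ℝ)} (hT : IsPosDS μ T)
    {f : Ω →ₘ[μ] ℝ} (hf : MemLp f 2 μ) : eLpNorm (T f) 2 μ ≤ eLpNorm f 2 μ := by
  have hfs := memSum_L2 hf
  have hint : Integrable (⇑(f * f)) μ := by
    refine hf.integrable_sq.congr ?_
    filter_upwards [AEEqFun.coeFn_mul f f] with ω h
    rw [h, Pi.mul_apply, sq]
  have hff : MemL1pLinf μ (f * f) := memSum_of_one (memLp_one_iff_integrable.2 hint).eLpNorm_ne_top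
  set e : Ω →ₘ[μ] ℝ := AEEqFun.const Ω (1:ℝ) with he
  have hee : e =ᵐ[μ] fun _ => (1:ℝ) := AEEqFun.coeFn_const Ω (1:ℝ)
  have he1 : eLpNorm e ⊤ μ ≤ 1 := by
    rw [eLpNorm_exponent_top]
    refine eLpNormEssSup_le_of_ae_enorm_bound ?_
    filter_upwards [hee] with ω h
    rw [h]; simp
  have hes : MemL1pLinf μ e := memSum_of_top (ne_top_of_le_ne_top one_ne_top he1)
  have hTe : ∀ᵐ ω ∂μ, T e ω ≤ 1 := by
    have := (hT.norm_top e hes).trans he1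
    rw [eLpNorm_exponent_top] at this
    filter_upwards [ae_le_eLpNormEssSup (f := T e) (μ := μ)] with ω h
    have h := h.trans this
    rw [← ofReal_norm_eq_enorm, ← ENNReal.ofReal_one, ENNReal.ofReal_le_ofReal_iff zero_le_one] at h
    exact (le_abs_self _).trans h
  have hsmul : ∀ (c : ℝ) (g : Ω →ₘ[μ] ℝ), MemL1pLinf μ g → MemL1pLinf μ (c • g) := by
    rintro c g ⟨a, b, ha, hb, rfl⟩
    refine ⟨c • a, c • b, ?_, ?_, smul_add _ _ _⟩
    · rw [eLpNorm_congr_ae (AEEqFun.coeFn_smul c a), eLpNorm_const_smul]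
      exact ENNReal.mul_ne_top enorm_ne_top ha
    · rw [eLpNorm_congr_ae (AEEqFun.coeFn_smul c b), eLpNorm_const_smul]
      exact ENNReal.mul_ne_top enorm_ne_top hb
  have hadd : ∀ (g h : Ω →ₘ[μ] ℝ), MemL1pLinf μ g → MemL1pLinf μ h → MemL1pLinf μ (g + h) := by
    rintro g h ⟨a, b, ha, hb, rfl⟩ ⟨c, d, hc, hd, rfl⟩
    refine ⟨a + c, b + d, ?_, ?_, by abel⟩
    · rw [eLpNorm_congr_ae (AEEqFun.coeFn_add a c)]
      exact ne_top_of_le_ne_top (ENNReal.add_ne_top.2 ⟨ha, hc⟩)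
        (eLpNorm_add_le a.aestronglyMeasurable c.aestronglyMeasurable le_rfl)
    · rw [eLpNorm_congr_ae (AEEqFun.coeFn_add b d)]
      exact ne_top_of_le_ne_top (ENNReal.add_ne_top.2 ⟨hb, hd⟩)
        (eLpNorm_add_le b.aestronglyMeasurable d.aestronglyMeasurable le_top)
  have key : ∀ t : ℚ, ∀ᵐ ω ∂μ, 0 ≤ T (f * f) ω + (-(2 * (t:ℝ)) * T f ω + (t:ℝ)^2) := by
    intro t
    have h0 : (0 : Ω →ₘ[μ] ℝ) ≤ f * f + ((-(2 * (t:ℝ))) • f + ((t:ℝ)^2) • e) := by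
      rw [← AEEqFun.coeFn_le]
      filter_upwards [AEEqFun.coeFn_zero (μ := μ) (α := Ω) (β := ℝ), AEEqFun.coeFn_mul f f, hee,
        AEEqFun.coeFn_add (f * f) ((-(2 * (t:ℝ))) • f + ((t:ℝ)^2) • e),
        AEEqFun.coeFn_add ((-(2 * (t:ℝ))) • f) (((t:ℝ)^2) • e),
        AEEqFun.coeFn_smul (-(2 * (t:ℝ))) f, AEEqFun.coeFn_smul ((t:ℝ)^2) e] with ω h1 h2 h3 h4 h5 h6 h7
      rw [h1, h4, Pi.add_apply, h5, Pi.add_apply, h6, h7, h2]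
      simp only [Pi.zero_apply, Pi.mul_apply, Pi.smul_apply, smul_eq_mul, h3]
      nlinarith [sq_nonneg (f ω - t)]
    have h1 := hT.map_pos _ (hadd _ _ hff (hadd _ _ (hsmul _ _ hfs) (hsmul _ _ hes))) h0
    rw [hT.map_add _ _ hff (hadd _ _ (hsmul _ _ hfs) (hsmul _ _ hes)),
      hT.map_add _ _ (hsmul _ _ hfs) (hsmul _ _ hes), hT.map_smul _ _ hfs, hT.map_smul _ _ hes] at h1
    rw [← AEEqFun.coeFn_le] at h1
    filter_upwards [h1, hTe, AEEqFun.coeFn_zero (μ := μ) (α := Ω) (β := ℝ),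
        AEEqFun.coeFn_add (T (f * f)) ((-(2 * (t:ℝ))) • T f + ((t:ℝ)^2) • T e),
        AEEqFun.coeFn_add ((-(2 * (t:ℝ))) • T f) (((t:ℝ)^2) • T e),
        AEEqFun.coeFn_smul (-(2 * (t:ℝ))) (T f), AEEqFun.coeFn_smul ((t:ℝ)^2) (T e)]
      with ω g1 g2 g3 g4 g5 g6 g7
    rw [g3, g4, Pi.add_apply, g5, Pi.add_apply, g6, g7] at g1
    simp only [Pi.zero_apply, Pi.smul_apply, smul_eq_mul] at g1
    nlinarith [sq_nonneg (t:ℝ)]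
  have key2 : ∀ᵐ ω ∂μ, (T f ω)^2 ≤ T (f * f) ω := by
    filter_upwards [ae_all_iff.2 key] with ω h
    have h2 : ∀ t : ℝ, 0 ≤ T (f * f) ω + (-(2 * t) * T f ω + t^2) := by
      intro t
      refine Rat.denseRange_cast.induction_on (p := fun t : ℝ => 0 ≤ T (f * f) ω + (-(2 * t) * T f ω + t^2)) t ?_ h
      exact isClosed_le continuous_const (by fun_prop)
    nlinarith [h2 (T f ω)]
  have e2 : ∀ g : Ω →ₘ[μ] ℝ, eLpNorm g 2 μ = (∫⁻ ω, ‖g ω‖ₑ ^ (2:ℝ) ∂μ) ^ (1/2 : ℝ) := by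
    intro g
    rw [eLpNorm_eq_lintegral_rpow_enorm_toReal (by simp) (by simp)]; simp
  rw [e2, e2]
  refine ENNReal.rpow_le_rpow ?_ (by norm_num)
  have hn := hT.norm_one _ hff
  rw [eLpNorm_one_eq_lintegral_enorm, eLpNorm_one_eq_lintegral_enorm] at hn
  calc _ ≤ ∫⁻ ω, ‖T (f * f) ω‖ₑ ∂μ := by
        refine lintegral_mono_ae ?_
        filter_upwards [key2] with ω h
        rw [← ofReal_norm_eq_enorm, ← ofReal_norm_eq_enorm, ENNReal.ofReal_rpow_of_nonneg (norm_nonneg _) (by norm_num)]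
        refine ENNReal.ofReal_le_ofReal ?_
        rw [Real.rpow_two, Real.norm_eq_abs, sq_abs]
        exact h.trans (le_abs_self _)
    _ ≤ _ := hn
    _ = _ := by
        refine lintegral_congr_ae ?_
        filter_upwards [AEEqFun.coeFn_mul f f] with ω h
        rw [h, Pi.mul_apply, enorm_mul]
        norm_num [sq]

noncomputable def opL2 {μ : Measure Ω} {T : (Ω →ₘ[μ] ℝ) → (Ω →ₘ[μ] ℝ)}
    (hT : IsPosDS μ T) : Lp ℝ 2 μ →L[ℝ] Lp ℝ 2 μ :=
  opLp hT (fun f => memSum_L2 (Lp.memLp f)) (fun f => l2_contr hT (Lp.memLp f))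

lemma opL2_coe {μ : Measure Ω} {T : (Ω →ₘ[μ] ℝ) → (Ω →ₘ[μ] ℝ)}
    (hT : IsPosDS μ T) (f : Lp ℝ 2 μ) : (opL2 hT f).1 = T f.1 := rfl

lemma opL2_dop {μ : Measure Ω} {T : (Ω →ₘ[μ] ℝ) → (Ω →ₘ[μ] ℝ)}
    (hT : IsPosDS μ T) : DOp (leOne μ) (opL2 hT) := opLp_dop _ _ _

section AvgOps
variable {E : Type*} [NormedAddCommGroup E] [NormedSpace ℝ E] [PartialOrder E]
  [IsOrderedAddMonoid E] [OrderClosedTopology E] [PosSMulMono ℝ E] [CompleteSpace E]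

noncomputable def aAvg {E : Type*} [NormedAddCommGroup E] [NormedSpace ℝ E] (n : ℕ) (S : E →L[ℝ] E) : E →L[ℝ] E :=
  (n:ℝ)⁻¹ • ∑ j ∈ Finset.range n, S ^ j

noncomputable def mAvg {E : Type*} [NormedAddCommGroup E] [NormedSpace ℝ E] {d : ℕ} (S : Fin d → E →L[ℝ] E)
    (n : Fin d → ℕ) : E →L[ℝ] E :=
  (List.ofFn fun i => aAvg (n i) (S i)).prod

lemma mAvg_succ {d : ℕ} (S : Fin (d+1) → E →L[ℝ] E) (n : Fin (d+1) → ℕ) :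
    mAvg S n = aAvg (n 0) (S 0) * mAvg (fun i => S i.succ) (fun i => n i.succ) := by
  simp [mAvg, List.ofFn_succ]

lemma mAvg_eq {d : ℕ} (S : Fin d → E →L[ℝ] E) (n : Fin d → ℕ) :
    mAvg S n = (∏ i, (n i : ℝ))⁻¹ • ∑ k ∈ Fintype.piFinset (fun i => Finset.range (n i)),
      (List.ofFn fun i => S i ^ k i).prod := by
  induction d with
  | zero => simp [mAvg]
  | succ d ih =>
    rw [mAvg_succ, ih, aAvg, smul_mul_smul_comm, Fin.prod_univ_succ, mul_inv]
    congr 1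
    rw [Finset.sum_mul_sum, ← Finset.sum_product']
    refine Finset.sum_nbij' (fun x => Fin.cons x.1 x.2) (fun k => (k 0, fun i => k i.succ)) ?_ ?_ ?_ ?_ ?_
    · rintro ⟨a, b⟩ h
      simp only [Finset.mem_product, Fintype.mem_piFinset] at h ⊢
      intro i
      refine Fin.cases ?_ (fun i => ?_) i
      · simpa using h.1
      · simpa using h.2 i
    · intro k h
      simp only [Finset.mem_product, Fintype.mem_piFinset] at h ⊢
      exact ⟨h 0, fun i => h _⟩
    · rintro ⟨a, b⟩ h
      simp
    · intro k h
      funext i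
      refine Fin.cases ?_ (fun i => ?_) i <;> simp
    · rintro ⟨a, b⟩ h
      simp [List.ofFn_succ]

lemma aAvg_dop {C : Set E} (hC : Convex ℝ C) (h0 : (0:E) ∈ C) {S : E →L[ℝ] E} (hS : DOp C S) (n : ℕ) :
    DOp C (aAvg n S) := by
  unfold aAvg
  rw [Finset.smul_sum]
  refine DOp.sum hC h0 (fun _ _ => by positivity) ?_ (fun j _ => hS.pow j)
  simpa using mul_inv_le_one

lemma mAvg_dop {C : Set E} (hC : Convex ℝ C) (h0 : (0:E) ∈ C) {d : ℕ} {S : Fin d → E →L[ℝ] E}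
    (hS : ∀ i, DOp C (S i)) (n : Fin d → ℕ) : DOp C (mAvg S n) := by
  induction d with
  | zero => simpa [mAvg] using DOp.one
  | succ d ih =>
    rw [mAvg_succ]
    exact (aAvg_dop hC h0 (hS 0) _).mul (ih (fun i => hS _) _)

lemma aAvg_le {S : E →L[ℝ] E} (hS : PosOp S) {n N : ℕ} (h0 : n ≠ 0) (h : n ≤ N + 1) {K : ℝ}
    (hK : ((N:ℝ)+1) ≤ K * n) : OpLE (aAvg n S) (K • bAvg N S) := by
  have hn : (0:ℝ) < n := by positivity
  have h1 : OpLE (aAvg n S) ((n:ℝ)⁻¹ • ∑ j ∈ Finset.range (N+1), S ^ j) := by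
    refine OpLE.smul ?_ (by positivity)
    unfold OpLE
    rw [← Finset.sum_sdiff (Finset.range_mono h), add_sub_cancel_right]
    exact PosOp.sum fun j _ => hS.pow j
  refine h1.trans ?_
  unfold bAvg
  rw [smul_smul]
  refine OpLE.smul_right (PosOp.sum fun j _ => hS.pow j) ?_
  rw [inv_eq_one_div, ← div_eq_mul_inv, div_le_div_iff₀ hn (by positivity)]
  simpa using hK

lemma mAvg_le {d : ℕ} {S : Fin d → E →L[ℝ] E} (hS : ∀ i, PosOp (S i)) {n : Fin d → ℕ} {N : ℕ}
    (h0 : ∀ i, n i ≠ 0) (h : ∀ i, n i ≤ N + 1) {K : ℝ} (hK0 : 0 ≤ K)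
    (hK : ∀ i, ((N:ℝ)+1) ≤ K * n i) :
    PosOp ((List.ofFn S).map (bAvg N)).prod ∧ PosOp (mAvg S n) ∧
    OpLE (mAvg S n) (K^d • ((List.ofFn S).map (bAvg N)).prod) := by
  induction d with
  | zero => 
    simp only [mAvg, List.ofFn_zero, List.prod_nil, List.map_nil, pow_zero, one_smul]
    exact ⟨PosOp.one, PosOp.one, OpLE.refl _⟩
  | succ d ih =>
    obtain ⟨i1, i2, i3⟩ := ih (S := fun i => S i.succ) (n := fun i => n i.succ) (fun i => hS _)
      (fun i => h0 _) (fun i => h _) (fun i => hK _)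
    rw [mAvg_succ, List.ofFn_succ, List.map_cons, List.prod_cons, pow_succ', ← smul_mul_smul_comm]
    have a0 : PosOp (aAvg (n 0) (S 0)) := (PosOp.sum fun j _ => (hS 0).pow j).smul (by positivity)
    exact ⟨(bAvg_pos (hS 0) N).mul i1, a0.mul i2,
      OpLE.mul (aAvg_le (hS 0) (h0 0) (h 0) (hK 0)) i3 a0 (i1.smul (by positivity))⟩

lemma mAvg_zero {d : ℕ} {S : Fin d → E →L[ℝ] E} {n : Fin d → ℕ} {i : Fin d} (hi : n i = 0) :
    mAvg S n = 0 := by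
  rw [mAvg_eq, Finset.prod_eq_zero (Finset.mem_univ i) (by simp [hi])]
  simp

lemma sector_dom {C : Set E} (hCc : IsClosed C) (hC : Convex ℝ C) (h0 : (0:E) ∈ C) {d : ℕ}
    {S : Fin d → E →L[ℝ] E} (hS : ∀ i, DOp C (S i)) (hcomm : ∀ i j, Commute (S i) (S j))
    {n : ℕ → Fin d → ℕ} (hsec : InSector n) :
    ∃ U, DOp C U ∧ ∃ c > 0, ∀ k, ∃ M, OpLE (mAvg S (n k)) ((c:ℝ) • bAvg M U) := by
  obtain ⟨c₀, hc₀⟩ := hsec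
  obtain ⟨U, hU, -, c, hc, hUc⟩ := list_lemma hCc hC h0 d (List.ofFn S)
    (by simpa using (Nat.lt_two_pow_self (n := d)).le)
    (by intro A hA; obtain ⟨i, rfl⟩ := (List.mem_ofFn' _ _).1 hA; exact hS i) (by
      intro A hA B hB
      obtain ⟨i, rfl⟩ := (List.mem_ofFn' _ _).1 hA
      obtain ⟨j, rfl⟩ := (List.mem_ofFn' _ _).1 hB
      exact hcomm i j)
  set q := 2^d with hq
  set K : ℝ := (2^q+1) * (d * |c₀| + 1) with hK
  have hKp : 0 < K := by positivity
  refine ⟨U, hU, K^d * c, by positivity, fun k => ?_⟩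
  by_cases hz : ∃ i, n k i = 0
  · obtain ⟨i, hi⟩ := hz
    refine ⟨0, ?_⟩
    rw [mAvg_zero hi]
    unfold OpLE
    rw [sub_zero]
    exact (bAvg_pos hU.pos 0).smul (by positivity)
  push Not at hz
  set N := ∑ i, n k i + 1 with hN
  have hex : ∃ M : ℕ, N ≤ M ^ q := ⟨N, Nat.le_self_pow (by positivity) N⟩
  classical
  set M := Nat.find hex with hM
  have hM1 : N ≤ M ^ q := Nat.find_spec hex
  have hM0 : M ≠ 0 := by
    intro h
    rw [h, zero_pow (by positivity)] at hM1
    omega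
  have hM2 : M ^ q ≤ 2 ^ q * N := by
    by_cases h1 : M = 1
    · rw [h1, one_pow]
      exact Nat.one_le_iff_ne_zero.2 (by positivity)
    have h2 : (M-1)^q < N := not_le.1 (Nat.find_min hex (m := M - 1) (by omega))
    calc M ^ q ≤ (2 * (M-1))^q := Nat.pow_le_pow_left (by omega) q
      _ = 2^q * (M-1)^q := mul_pow _ _ _
      _ ≤ _ := Nat.mul_le_mul_left _ h2.le
  refine ⟨M, ?_⟩
  have hi : ∀ i, n k i ≤ ∑ i, n k i := fun i => Finset.single_le_sum (f := n k) (fun _ _ => Nat.zero_le _) (Finset.mem_univ i)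
  have hdom := (mAvg_le (fun i => (hS i).pos) (n := n k) (N := M^q) (K := K) hz ?_ hKp.le ?_).2.2
  · refine hdom.trans ?_
    rw [mul_smul]
    exact (hUc M).smul (by positivity)
  · intro i
    have := hi i
    omega
  · intro i
    have hni : (1:ℝ) ≤ n k i := by exact_mod_cast Nat.one_le_iff_ne_zero.2 (hz i)
    have hNi : (N:ℝ) ≤ (d * |c₀| + 1) * n k i := by
      rw [hN]; push_cast
      have : ∑ j, (n k j : ℝ) ≤ ∑ j : Fin d, |c₀| * n k i := by
        refine Finset.sum_le_sum fun j _ => ?_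
        have := hc₀ k j i (hz i)
        rw [div_le_iff₀ (by linarith)] at this
        exact this.trans (mul_le_mul_of_nonneg_right (le_abs_self _) (by linarith))
      rw [Finset.sum_const] at this
      simp at this
      linarith
    have h2 : ((M^q : ℕ):ℝ) ≤ 2^q * N := by exact_mod_cast hM2
    have h3 : (1:ℝ) ≤ N := by rw [hN]; push_cast; linarith [Finset.sum_nonneg (s := Finset.univ) (f := fun j => (n k j : ℝ)) (fun _ _ => by positivity)]
    calc ((M^q : ℕ):ℝ) + 1 ≤ (2^q+1) * N := by linarith
      _ ≤ (2^q+1) * ((d * |c₀| + 1) * n k i) := by gcongr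
      _ = _ := by rw [hK]; ring

end AvgOps


lemma iter_bridge {μ : Measure Ω} {p : ℝ≥0∞} [Fact (1 ≤ p)] {d : ℕ}
    {T : Fin d → (Ω →ₘ[μ] ℝ) → (Ω →ₘ[μ] ℝ)} {S : Fin d → Lp ℝ p μ →L[ℝ] Lp ℝ p μ}
    (hST : ∀ i f, (S i f).1 = T i f.1) (k : Fin d → ℕ) (f : Lp ℝ p μ) :
    ((List.ofFn fun i => S i ^ k i).prod f).1 = iterComp T k f.1 := by
  induction d with
  | zero => simp [iterComp]
  | succ d ih =>
    have := ih (T := fun i => T i.succ) (S := fun i => S i.succ) (fun i f => hST _ f) (fun i => k i.succ)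
    simp only [iterComp, List.ofFn_succ, List.foldr_cons, List.prod_cons, Function.comp] at this ⊢
    rw [← this]
    rw [ContinuousLinearMap.mul_apply]
    generalize (List.ofFn fun i => S (Fin.succ i) ^ k (Fin.succ i)).prod f = g
    generalize k 0 = m
    induction m generalizing g with
    | zero => simp
    | succ m ihm =>
      rw [pow_succ, ContinuousLinearMap.mul_apply, ihm, Function.iterate_succ_apply, hST]

lemma multi_bridge {μ : Measure Ω} {p : ℝ≥0∞} [Fact (1 ≤ p)] {d : ℕ}
    {T : Fin d → (Ω →ₘ[μ] ℝ) → (Ω →ₘ[μ] ℝ)} {S : Fin d → Lp ℝ p μ →L[ℝ] Lp ℝ p μ}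
    (hST : ∀ i f, (S i f).1 = T i f.1) (n : Fin d → ℕ) (f : Lp ℝ p μ) :
    (mAvg S n f).1 = multiAvg μ T n f.1 := by
  rw [mAvg_eq, multiAvg, ContinuousLinearMap.smul_apply, ContinuousLinearMap.sum_apply]
  have h1 : ∀ (c : ℝ) (g : Lp ℝ p μ), (c • g).1 = c • g.1 := fun _ _ => rfl
  rw [h1, AddSubgroup.val_finset_sum]
  congr 1
  exact Finset.sum_congr rfl fun k _ => iter_bridge hST k f

/-- almost uniformly Cauchy -/
def AuC (μ : Measure Ω) (F : ℕ → Ω → ℝ) : Prop :=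
  ∀ ε : ℝ, 0 < ε → ∀ δ : ℝ, 0 < δ → ∃ E, MeasurableSet E ∧ μ Eᶜ ≤ ENNReal.ofReal ε ∧
    ∃ K : ℕ, ∀ k ≥ K, ∀ l ≥ K, ∀ᵐ ω ∂μ, ω ∈ E → |F k ω - F l ω| ≤ δ

def MaxCont {μ : Measure Ω} {p : ℝ≥0∞} [Fact (1 ≤ p)] (Φ : ℕ → Lp ℝ p μ →L[ℝ] Lp ℝ p μ) : Prop :=
  ∀ ε : ℝ, 0 < ε → ∀ δ : ℝ, 0 < δ → ∃ ρ : ℝ, 0 < ρ ∧ ∀ f : Lp ℝ p μ, ‖f‖ < ρ →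
    ∃ E, MeasurableSet E ∧ μ Eᶜ ≤ ENNReal.ofReal ε ∧ ∀ k, ∀ᵐ ω ∂μ, ω ∈ E → |Φ k f ω| ≤ δ

lemma compl_inter_le {μ : Measure Ω} {A B : Set Ω} {ε : ℝ} (hε : 0 < ε)
    (hA : μ Aᶜ ≤ ENNReal.ofReal (ε/2)) (hB : μ Bᶜ ≤ ENNReal.ofReal (ε/2)) :
    μ (A ∩ B)ᶜ ≤ ENNReal.ofReal ε := by
  rw [compl_inter]
  refine (measure_union_le _ _).trans ((add_le_add hA hB).trans ?_)
  rw [← ENNReal.ofReal_add (by positivity) (by positivity), add_halves]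

lemma AuC.add {μ : Measure Ω} {F G H : ℕ → Ω → ℝ} (hF : AuC μ F) (hG : AuC μ G)
    (h : ∀ k, H k =ᵐ[μ] fun ω => F k ω + G k ω) : AuC μ H := by
  intro ε hε δ hδ
  obtain ⟨A, hA, hA', K, hK⟩ := hF (ε/2) (by positivity) (δ/2) (by positivity)
  obtain ⟨B, hB, hB', L, hL⟩ := hG (ε/2) (by positivity) (δ/2) (by positivity)
  refine ⟨A ∩ B, hA.inter hB, compl_inter_le hε hA' hB', max K L, fun k hk l hl => ?_⟩
  filter_upwards [hK k (le_of_max_le_left hk) l (le_of_max_le_left hl),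
    hL k (le_of_max_le_right hk) l (le_of_max_le_right hl), h k, h l] with ω a b c d hω
  rw [c, d]
  have a := abs_le.1 (a hω.1)
  have b := abs_le.1 (b hω.2)
  exact abs_le.2 ⟨by linarith, by linarith⟩

lemma AuC.smul {μ : Measure Ω} {F H : ℕ → Ω → ℝ} (hF : AuC μ F) (c : ℝ)
    (h : ∀ k, H k =ᵐ[μ] fun ω => c * F k ω) : AuC μ H := by
  intro ε hε δ hδ
  obtain ⟨A, hA, hA', K, hK⟩ := hF ε hε (δ/(|c|+1)) (by positivity)
  refine ⟨A, hA, hA', K, fun k hk l hl => ?_⟩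
  filter_upwards [hK k hk l hl, h k, h l] with ω a b d hω
  rw [b, d, ← mul_sub, abs_mul]
  have a := a hω
  rw [le_div_iff₀ (by positivity)] at a
  nlinarith [abs_nonneg (F k ω - F l ω)]

lemma AuC.of_small {μ : Measure Ω} {F : ℕ → Ω → ℝ}
    (h : ∀ δ : ℝ, 0 < δ → ∃ K, ∀ k ≥ K, ∀ᵐ ω ∂μ, |F k ω| ≤ δ) : AuC μ F := by
  intro ε hε δ hδ
  obtain ⟨K, hK⟩ := h (δ/2) (by positivity)
  refine ⟨univ, MeasurableSet.univ, by simp, K, fun k hk l hl => ?_⟩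
  filter_upwards [hK k hk, hK l hl] with ω a b _
  have a := abs_le.1 a
  have b := abs_le.1 b
  exact abs_le.2 ⟨by linarith, by linarith⟩

noncomputable def aucSub {μ : Measure Ω} {p : ℝ≥0∞} [Fact (1 ≤ p)]
    (Φ : ℕ → Lp ℝ p μ →L[ℝ] Lp ℝ p μ) : Submodule ℝ (Lp ℝ p μ) where
  carrier := {f | AuC μ fun k => Φ k f}
  add_mem' := by
    intro f g hf hg
    refine AuC.add hf hg fun k => ?_
    rw [map_add]
    exact Lp.coeFn_add _ _
  zero_mem' := by
    refine AuC.of_small fun δ hδ => ⟨0, fun k _ => ?_⟩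
    rw [map_zero]
    filter_upwards [Lp.coeFn_zero ℝ p μ] with ω h
    rw [h]; simpa using hδ.le
  smul_mem' := by
    intro c f hf
    refine AuC.smul hf c fun k => ?_
    rw [map_smul]
    exact Lp.coeFn_smul _ _

lemma mem_aucSub {μ : Measure Ω} {p : ℝ≥0∞} [Fact (1 ≤ p)]
    {Φ : ℕ → Lp ℝ p μ →L[ℝ] Lp ℝ p μ} {f : Lp ℝ p μ} : f ∈ aucSub Φ ↔ AuC μ fun k => Φ k f := Iff.rfl

lemma aucSub_closed {μ : Measure Ω} {p : ℝ≥0∞} [Fact (1 ≤ p)]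
    {Φ : ℕ → Lp ℝ p μ →L[ℝ] Lp ℝ p μ} (hΦ : MaxCont Φ) : IsClosed (aucSub Φ : Set (Lp ℝ p μ)) := by
  refine isClosed_of_closure_subset fun f hf => ?_
  rw [SetLike.mem_coe, mem_aucSub]
  intro ε hε δ hδ
  obtain ⟨ρ, hρ, h⟩ := hΦ (ε/2) (by positivity) (δ/3) (by positivity)
  obtain ⟨g, hg, hfg⟩ := Metric.mem_closure_iff.1 hf ρ hρ
  rw [dist_eq_norm] at hfg
  obtain ⟨A, hA, hA', h1⟩ := h _ hfg
  obtain ⟨B, hB, hB', K, hK⟩ := mem_aucSub.1 hg (ε/2) (by positivity) (δ/3) (by positivity)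
  refine ⟨A ∩ B, hA.inter hB, compl_inter_le hε hA' hB', K, fun k hk l hl => ?_⟩
  have e : ∀ k, ∀ᵐ ω ∂μ, Φ k (f - g) ω = Φ k f ω - Φ k g ω := by
    intro k
    rw [map_sub]
    exact Lp.coeFn_sub _ _
  filter_upwards [h1 k, h1 l, hK k hk l hl, e k, e l] with ω a b c d d' hω
  have a := abs_le.1 (a hω.1)
  have b := abs_le.1 (b hω.1)
  have c := abs_le.1 (c hω.2)
  rw [d] at a
  rw [d'] at b
  exact abs_le.2 ⟨by linarith, by linarith⟩

lemma AuC.strong {μ : Measure Ω} {F : ℕ → Ω → ℝ} (hF : AuC μ F) {ε : ℝ} (hε : 0 < ε) :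
    ∃ E, MeasurableSet E ∧ μ Eᶜ ≤ ENNReal.ofReal ε ∧ ∀ δ : ℝ, 0 < δ →
    ∃ K : ℕ, ∀ k ≥ K, ∀ l ≥ K, ∀ᵐ ω ∂μ, ω ∈ E → |F k ω - F l ω| ≤ δ := by
  choose E hE hE' K hK using fun t : ℕ => hF (ε * (1/2)^(t+1)) (by positivity) (1/((t:ℝ)+1)) (by positivity)
  refine ⟨⋂ t, E t, MeasurableSet.iInter hE, ?_, fun δ hδ => ?_⟩
  · rw [compl_iInter]
    refine (measure_iUnion_le _).trans ((ENNReal.tsum_le_tsum hE').trans ?_)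
    have hs : HasSum (fun t : ℕ => ε * (1/2:ℝ)^(t+1)) ε := by
      have := (hasSum_geometric_two.mul_left (ε/2))
      have e1 : (fun t : ℕ => ε * (1/2:ℝ)^(t+1)) = fun t : ℕ => ε/2 * (1/2:ℝ)^t := by
        funext t; rw [pow_succ]; ring
      rw [e1]
      rwa [div_mul_cancel₀ _ (two_ne_zero)] at this
    rw [← ENNReal.ofReal_tsum_of_nonneg (fun t => by positivity) hs.summable, hs.tsum_eq]
  · obtain ⟨t, ht⟩ := exists_nat_one_div_lt hδ
    refine ⟨K t, fun k hk l hl => ?_⟩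
    filter_upwards [hK t k hk l hl] with ω h hω
    exact (h (mem_iInter.1 hω t)).trans ht.le

lemma AuC.limit {μ : Measure Ω} {F : ℕ → Lp ℝ 1 μ} (hF : AuC μ fun k => F k) {C : ℝ}
    (hC : ∀ k, ‖F k‖ ≤ C) :
    ∃ g : Ω →ₘ[μ] ℝ, eLpNorm g 1 μ ≠ ∞ ∧ AuTendsto μ atTop (fun k => (F k).1) g := by
  choose E hE hE' K hK using fun s : ℕ => hF.strong (ε := 1/((s:ℝ)+1)) (by positivity)
  have hcov : ∀ᵐ ω ∂μ, ∃ s, ω ∈ E s := by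
    rw [ae_iff]
    refine le_antisymm ?_ (zero_le)
    have hle : ∀ s : ℕ, μ {ω | ¬ ∃ s, ω ∈ E s} ≤ ENNReal.ofReal (1/((s:ℝ)+1)) := fun s =>
      (measure_mono fun ω hω => by
        simp only [not_exists, mem_setOf_eq] at hω
        exact hω s).trans (hE' s)
    have ht : Tendsto (fun s : ℕ => ENNReal.ofReal (1/((s:ℝ)+1))) atTop (𝓝 0) := by
      rw [← ENNReal.ofReal_zero]
      exact ENNReal.tendsto_ofReal tendsto_one_div_add_atTop_nhds_zero_nat
    exact ge_of_tendsto' ht hle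
  have hall : ∀ᵐ ω ∂μ, ∀ s t k l : ℕ, K s (1/((t:ℝ)+1)) (by positivity) ≤ k →
      K s (1/((t:ℝ)+1)) (by positivity) ≤ l → ω ∈ E s → |F k ω - F l ω| ≤ 1/((t:ℝ)+1) := by
    refine ae_all_iff.2 fun s => ae_all_iff.2 fun t => ae_all_iff.2 fun k => ae_all_iff.2 fun l => ?_
    by_cases hk : K s (1/((t:ℝ)+1)) (by positivity) ≤ k
    · by_cases hl : K s (1/((t:ℝ)+1)) (by positivity) ≤ l
      · filter_upwards [hK s (1/((t:ℝ)+1)) (by positivity) k hk l hl] with ω h _ _ hω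
        exact h hω
      · exact ae_of_all _ fun ω _ h => absurd h hl
    · exact ae_of_all _ fun ω h => absurd h hk
  have hlim : ∀ᵐ ω ∂μ, ∃ l, Tendsto (fun k => F k ω) atTop (𝓝 l) := by
    filter_upwards [hcov, hall] with ω h1 h2
    obtain ⟨s, hs⟩ := h1
    refine cauchySeq_tendsto_of_complete (Metric.cauchySeq_iff.2 fun δ hδ => ?_)
    obtain ⟨t, ht⟩ := exists_nat_one_div_lt hδ
    exact ⟨_, fun k hk l hl => (h2 s t k l hk hl hs).trans_lt ht⟩
  obtain ⟨g, hg, hgl⟩ := exists_stronglyMeasurable_limit_of_tendsto_ae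
    (fun k => Lp.aestronglyMeasurable (F k)) hlim
  refine ⟨AEEqFun.mk g hg.aestronglyMeasurable, ?_, ?_⟩
  · rw [eLpNorm_congr_ae (AEEqFun.coeFn_mk _ _)]
    have h1 := Lp.eLpNorm_lim_le_liminf_eLpNorm (p := 1) (fun k => Lp.aestronglyMeasurable (F k)) g hgl
    refine ne_top_of_le_ne_top (b := ENNReal.ofReal C) ofReal_ne_top (h1.trans ?_)
    refine liminf_le_of_le (by isBoundedDefault) fun b hb => ?_
    obtain ⟨k, hk⟩ := hb.exists
    refine hk.trans ?_
    rw [← Lp.enorm_def, ← ofReal_norm_eq_enorm]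
    exact ENNReal.ofReal_le_ofReal (hC k)
  · intro ε hε
    obtain ⟨A, hA, hA', h⟩ := hF.strong hε
    refine ⟨A, hA, hA', ENNReal.tendsto_nhds_zero.2 fun δ hδ => ?_⟩
    obtain ⟨δ', hδ', hδ''⟩ : ∃ δ' : ℝ, 0 < δ' ∧ ENNReal.ofReal δ' ≤ δ := by
      obtain ⟨r, hr, hr'⟩ := ENNReal.lt_iff_exists_nnreal_btwn.1 hδ
      exact ⟨r, by simpa using hr, by simpa using hr'.le⟩
    obtain ⟨L, hL⟩ := h δ' hδ'
    filter_upwards [eventually_ge_atTop L] with k hk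
    refine le_trans ?_ hδ''
    rw [eLpNorm_exponent_top]
    refine eLpNormEssSup_le_of_ae_enorm_bound ?_
    have hL' : ∀ᵐ ω ∂μ, ∀ l, l ≥ L → ω ∈ A → |F k ω - F l ω| ≤ δ' := by
      refine ae_all_iff.2 fun l => ?_
      by_cases hl : l ≥ L
      · filter_upwards [hL k hk l hl] with ω h _
        exact h
      · exact ae_of_all _ fun ω h => absurd h hl
    filter_upwards [hgl, hL', AEEqFun.coeFn_mk g hg.aestronglyMeasurable,
      AEEqFun.coeFn_sub (F k).1 (AEEqFun.mk g hg.aestronglyMeasurable)] with ω h1 h2 h3 h4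
    by_cases hω : ω ∈ A
    · rw [indicator_of_mem hω, h4, Pi.sub_apply, h3, ← ofReal_norm_eq_enorm]
      refine ENNReal.ofReal_le_ofReal ?_
      refine le_of_tendsto ((tendsto_const_nhds.sub h1).norm) ?_
      filter_upwards [eventually_ge_atTop L] with l hl
      exact h2 l hl hω
    · rw [indicator_of_notMem hω]; simp

section Telescope
variable {E : Type*} [NormedAddCommGroup E] [NormedSpace ℝ E] [PartialOrder E]
  [IsOrderedAddMonoid E] [OrderClosedTopology E] [PosSMulMono ℝ E] [CompleteSpace E]

lemma commute_aAvg {A S : E →L[ℝ] E} (h : Commute A S) (n : ℕ) : Commute A (aAvg n S) := by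
  unfold aAvg
  exact (Commute.sum_right _ _ _ fun j _ => h.pow_right j).smul_right _

lemma commute_mAvg {A : E →L[ℝ] E} {d : ℕ} {S : Fin d → E →L[ℝ] E} (h : ∀ i, Commute A (S i))
    (n : Fin d → ℕ) : Commute A (mAvg S n) := by
  unfold mAvg
  refine Commute.list_prod_right _ _ fun B hB => ?_
  obtain ⟨i, rfl⟩ := (List.mem_ofFn' _ _).1 hB
  exact commute_aAvg (h i) _

lemma aAvg_tel (S : E →L[ℝ] E) (n : ℕ) : aAvg n S * (1 - S) = (n:ℝ)⁻¹ • (1 - S ^ n) := by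
  unfold aAvg
  rw [smul_mul_assoc, geom_sum_mul_neg]

lemma mAvg_tel {C : Set E} (hC : Convex ℝ C) (h0 : (0:E) ∈ C) {d : ℕ} {S : Fin d → E →L[ℝ] E}
    (hS : ∀ i, DOp C (S i)) (hcomm : ∀ i j, Commute (S i) (S j)) (n : Fin d → ℕ) (i : Fin d) :
    ∃ B, DOp C B ∧ mAvg S n * (1 - S i) = (n i:ℝ)⁻¹ • ((1 - S i ^ n i) * B) := by
  induction d with
  | zero => exact i.elim0
  | succ d ih =>
    rw [mAvg_succ]
    refine Fin.cases ?_ (fun i => ?_) i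
    · refine ⟨mAvg (fun i => S i.succ) (fun i => n i.succ), mAvg_dop hC h0 (fun i => hS _) _, ?_⟩
      have h1 : Commute (1 - S 0) (mAvg (fun i => S i.succ) (fun i => n i.succ)) :=
        commute_mAvg (fun i => (Commute.one_left _).sub_left (hcomm _ _)) _
      rw [mul_assoc, ← h1.eq, ← mul_assoc, aAvg_tel, smul_mul_assoc]
    · obtain ⟨B, hB, h⟩ := ih (S := fun i => S i.succ) (fun i => hS _) (fun i j => hcomm _ _)
        (fun i => n i.succ) i
      refine ⟨aAvg (n 0) (S 0) * B, (aAvg_dop hC h0 (hS 0) _).mul hB, ?_⟩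
      have h1 : Commute (1 - S i.succ ^ n i.succ) (aAvg (n 0) (S 0)) :=
        commute_aAvg ((Commute.one_left _).sub_left ((hcomm _ _).pow_left _)) _
      rw [mul_assoc, h, mul_smul_comm, ← mul_assoc, ← h1.eq, mul_assoc]

lemma mAvg_fix {d : ℕ} {S : Fin d → E →L[ℝ] E} {n : Fin d → ℕ} {h : E} (hh : ∀ i, S i h = h)
    (hn : ∀ i, n i ≠ 0) : mAvg S n h = h := by
  induction d with
  | zero => simp [mAvg]
  | succ d ih =>
    rw [mAvg_succ, ContinuousLinearMap.mul_apply, ih (fun i => hh _) (fun i => hn _)]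
    have hp : ∀ j : ℕ, (S 0 ^ j) h = h := by
      intro j
      induction j with
      | zero => simp
      | succ j ihj => rw [pow_succ, ContinuousLinearMap.mul_apply, hh, ihj]
    have : ((n 0 : ℕ) : ℝ) ≠ 0 := by exact_mod_cast hn 0
    unfold aAvg
    rw [ContinuousLinearMap.smul_apply, ContinuousLinearMap.sum_apply]
    simp only [hp, Finset.sum_const, Finset.card_range]
    rw [← Nat.cast_smul_eq_nsmul ℝ, smul_smul, inv_mul_cancel₀ this, one_smul]

end Telescope


lemma mAvg_dop_lp {μ : Measure Ω} {p : ℝ≥0∞} [Fact (1 ≤ p)] {d : ℕ}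
    {S : Fin d → Lp ℝ p μ →L[ℝ] Lp ℝ p μ} (hS : ∀ i, DOp (leOne μ (p := p)) (S i)) (n : Fin d → ℕ) :
    DOp (leOne μ (p := p)) (mAvg S n) :=
  mAvg_dop (E := Lp ℝ p μ) (C := leOne μ (p := p)) leOne_convex leOne_zero hS n

lemma maxCont_one {μ : Measure Ω} {d : ℕ} {S : Fin d → Lp ℝ 1 μ →L[ℝ] Lp ℝ 1 μ}
    (hS : ∀ i, DOp (leOne μ) (S i)) (hcomm : ∀ i j, Commute (S i) (S j))
    {n : ℕ → Fin d → ℕ} (hsec : InSector n) : MaxCont fun k => mAvg S (n k) := by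
  obtain ⟨U, hU, c, hc, h⟩ := sector_dom leOne_closed leOne_convex leOne_zero hS hcomm hsec
  intro ε hε δ hδ
  refine ⟨ε * δ / c, by positivity, fun f hf => ?_⟩
  have habs : (0 : Lp ℝ 1 μ) ≤ |f| := abs_nonneg f
  refine ⟨{ω | ∃ m, δ / c < bAvg m U |f| ω}ᶜ, ?_, ?_, fun k => ?_⟩
  · refine MeasurableSet.compl ?_
    rw [setOf_exists]
    exact MeasurableSet.iUnion fun m =>
      measurableSet_lt measurable_const (Lp.stronglyMeasurable _).measurable
  · rw [compl_compl]
    refine (weak_one hU habs (by positivity)).trans (ENNReal.ofReal_le_ofReal ?_)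
    rw [norm_abs_eq_norm, div_div_eq_mul_div, div_le_iff₀ hδ]
    rw [lt_div_iff₀ hc] at hf
    exact hf.le
  · obtain ⟨M, hM⟩ := h k
    have h1 : |mAvg S (n k) f| ≤ mAvg S (n k) |f| :=
      PosOp.abs_le (mAvg_dop_lp hS (n k)).pos f
    have h2 := h1.trans (hM.apply habs)
    rw [← Lp.coeFn_le] at h2
    filter_upwards [h2, Lp.coeFn_abs (mAvg S (n k) f), Lp.coeFn_smul c (bAvg M U |f|)] with ω a b e hω
    rw [b] at a
    refine a.trans ?_
    have : (c • bAvg M U |f| : Lp ℝ 1 μ) ω = c * bAvg M U |f| ω := e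
    refine (le_of_eq this).trans ?_
    simp only [mem_compl_iff, mem_setOf_eq, not_exists, not_lt] at hω
    have := hω M
    rw [le_div_iff₀ hc] at this
    linarith

lemma maxCont_two {μ : Measure Ω} {d : ℕ} {S1 : Fin d → Lp ℝ 1 μ →L[ℝ] Lp ℝ 1 μ}
    {S2 : Fin d → Lp ℝ 2 μ →L[ℝ] Lp ℝ 2 μ} {n : ℕ → Fin d → ℕ}
    (hS2 : ∀ i, DOp (leOne μ) (S2 i)) (h1 : MaxCont fun k => mAvg S1 (n k))
    (hbr : ∀ k (f1 : Lp ℝ 1 μ) (f2 : Lp ℝ 2 μ), f1.1 = f2.1 → (mAvg S1 (n k) f1).1 = (mAvg S2 (n k) f2).1) :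
    MaxCont fun k => mAvg S2 (n k) := by
  intro ε hε δ hδ
  obtain ⟨ρ, hρ, h⟩ := h1 ε hε (δ/2) (by positivity)
  refine ⟨Real.sqrt (ρ * (δ/2)), by positivity, fun f hf => ?_⟩
  set s : Set Ω := {ω | δ/2 < |f ω|} with hs
  have hsm : MeasurableSet s := measurableSet_lt measurable_const (Lp.stronglyMeasurable f).measurable.abs
  have m1 : MemLp (s.indicator f) 2 μ := (Lp.memLp f).indicator hsm
  have m2 : MemLp (sᶜ.indicator f) 2 μ := (Lp.memLp f).indicator hsm.compl
  have hsq : Integrable (fun ω => (f ω)^2) μ := (Lp.memLp f).integrable_sq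
  have hbd : ∀ ω, ‖s.indicator f ω‖ ≤ (δ/2)⁻¹ * (f ω)^2 := by
    intro ω
    by_cases hω : ω ∈ s
    · rw [indicator_of_mem hω, Real.norm_eq_abs, ← sq_abs]
      have : δ/2 < |f ω| := hω
      rw [← div_eq_inv_mul, le_div_iff₀ (by positivity)]
      nlinarith
    · rw [indicator_of_notMem hω]; simp; positivity
  have i1 : Integrable (s.indicator f) μ :=
    (hsq.const_mul (δ/2)⁻¹).mono' m1.1 (ae_of_all _ hbd)
  have l1 : MemLp (s.indicator f) 1 μ := memLp_one_iff_integrable.2 i1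
  have hnorm : ‖l1.toLp‖ < ρ := by
    rw [L1.norm_eq_integral_norm]
    have e1 : ∫ ω, ‖l1.toLp _ ω‖ ∂μ ≤ ∫ ω, (δ/2)⁻¹ * (f ω)^2 ∂μ := by
      refine integral_mono_ae (L1.integrable_coeFn _).norm (hsq.const_mul _) ?_
      filter_upwards [l1.coeFn_toLp] with ω hω
      rw [hω]; exact hbd ω
    refine e1.trans_lt ?_
    rw [integral_const_mul]
    have e2 : ∫ ω, (f ω)^2 ∂μ = ‖f‖^2 := by
      rw [← real_inner_self_eq_norm_sq, L2.inner_def]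
      refine integral_congr_ae (ae_of_all _ fun ω => ?_)
      simp [sq]
    rw [e2, ← div_eq_inv_mul, div_lt_iff₀ (by positivity)]
    exact (Real.lt_sqrt (norm_nonneg _)).1 hf
  obtain ⟨A, hA, hA', hk⟩ := h _ hnorm
  refine ⟨A, hA, hA', fun k => ?_⟩
  have hf12 : f = m1.toLp + m2.toLp := by
    refine Lp.ext ?_
    filter_upwards [Lp.coeFn_add (m1.toLp) (m2.toLp), m1.coeFn_toLp, m2.coeFn_toLp] with ω a b c
    rw [a, Pi.add_apply, b, c]
    exact (congrFun (indicator_self_add_compl s f) ω).symm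
  have hb := hbr k l1.toLp m1.toLp rfl
  have hsmall : ∀ᵐ ω ∂μ, |mAvg S2 (n k) m2.toLp ω| ≤ δ/2 := by
    refine DOp.maps_abs_le (mAvg_dop_lp hS2 (n k)) (by positivity) ?_
    filter_upwards [m2.coeFn_toLp] with ω hω
    rw [hω]
    by_cases h : ω ∈ s
    · rw [indicator_of_notMem (by simpa using h)]; simp; positivity
    · rw [indicator_of_mem (by simpa using h)]
      exact not_lt.1 h
  have hadd : ∀ᵐ ω ∂μ, mAvg S2 (n k) f ω = mAvg S2 (n k) m1.toLp ω + mAvg S2 (n k) m2.toLp ω := by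
    conv in (mAvg S2 (n k) f) => rw [hf12, map_add]
    exact Lp.coeFn_add _ _
  filter_upwards [hk k, hsmall, hadd] with ω a b c hω
  have a := a hω
  have a' : |mAvg S2 (n k) m1.toLp ω| ≤ δ/2 := by
    have : (mAvg S1 (n k) l1.toLp : Ω → ℝ) = (mAvg S2 (n k) m1.toLp : Ω → ℝ) := congrArg (fun g : Ω →ₘ[μ] ℝ => (g : Ω → ℝ)) hb
    rw [← this]; exact a
  simp only [c]
  refine (abs_add_le _ _).trans ?_
  linarith

lemma aucSub_tel {μ : Measure Ω} {d : ℕ} {S : Fin d → Lp ℝ 2 μ →L[ℝ] Lp ℝ 2 μ}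
    (hS : ∀ i, DOp (leOne μ) (S i)) (hcomm : ∀ i j, Commute (S i) (S j))
    {n : ℕ → Fin d → ℕ} (hn : ∀ i, Tendsto (fun k => n k i) atTop atTop)
    (i : Fin d) {g : Lp ℝ 2 μ} {c : ℝ} (hc : 0 < c) (hg : ∀ᵐ ω ∂μ, |g ω| ≤ c) :
    (g - S i g) ∈ aucSub fun k => mAvg S (n k) := by
  rw [mem_aucSub]
  refine AuC.of_small fun δ hδ => ?_
  have ht : Tendsto (fun k => (n k i : ℝ)) atTop atTop := tendsto_natCast_atTop_atTop.comp (hn i)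
  obtain ⟨K, hK⟩ := eventually_atTop.1 (ht.eventually_ge_atTop (2 * c / δ + 1))
  refine ⟨K, fun k hk => ?_⟩
  have hk := hK k hk
  have hcd : 0 < 2 * c / δ := by positivity
  obtain ⟨B, hB, h⟩ := mAvg_tel (E := Lp ℝ 2 μ) (C := leOne μ (p := 2)) leOne_convex leOne_zero hS hcomm (n k) i
  have e : mAvg S (n k) (g - S i g) = (n k i : ℝ)⁻¹ • (B g - (S i ^ n k i) (B g)) := by
    have := congrArg (fun A : Lp ℝ 2 μ →L[ℝ] Lp ℝ 2 μ => A g) h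
    simpa using this
  have b1 := hB.maps_abs_le hc hg
  have b2 := ((hS i).pow (n k i)).maps_abs_le hc b1
  filter_upwards [b1, b2, Lp.coeFn_smul (n k i : ℝ)⁻¹ (B g - (S i ^ n k i) (B g)),
    Lp.coeFn_sub (B g) ((S i ^ n k i) (B g))] with ω a1 a2 a3 a4
  have hpos : (0:ℝ) < n k i := by linarith
  rw [e, a3, Pi.smul_apply, a4, Pi.sub_apply, smul_eq_mul, abs_mul, abs_of_pos (inv_pos.2 hpos),
    inv_mul_le_iff₀ hpos]
  have h1 : 2 * c ≤ n k i * δ := by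
    rw [← div_le_iff₀ hδ]; linarith
  have a1 := abs_le.1 a1
  have a2 := abs_le.1 a2
  exact abs_le.2 ⟨by linarith, by linarith⟩

lemma aucSub_two {μ : Measure Ω} {d : ℕ} {S : Fin d → Lp ℝ 2 μ →L[ℝ] Lp ℝ 2 μ}
    (hS : ∀ i, DOp (leOne μ) (S i)) (hcomm : ∀ i j, Commute (S i) (S j))
    {n : ℕ → Fin d → ℕ} (hn : ∀ i, Tendsto (fun k => n k i) atTop atTop)
    (hmax : MaxCont fun k => mAvg S (n k)) : aucSub (fun k => mAvg S (n k)) = ⊤ := by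
  have hcl := aucSub_closed hmax
  have hall : ∀ i (g : Lp ℝ 2 μ), g - S i g ∈ aucSub fun k => mAvg S (n k) := by
    intro i g
    refine Lp.induction (p := 2) (by simp) (motive := fun g => g - S i g ∈ aucSub fun k => mAvg S (n k)) ?_ ?_ ?_ g
    · intro c s hs hμs
      refine aucSub_tel hS hcomm hn i (c := |c| + 1) (by positivity) ?_
      rw [Lp.simpleFunc.coe_indicatorConst]
      filter_upwards [indicatorConstLp_coeFn (p := 2) (hs := hs) (hμs := hμs.ne) (c := c)] with ω h
      rw [h]
      by_cases hω : ω ∈ s <;> simp [hω]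
      positivity
    · intro f g hf hg _ h1 h2
      have := Submodule.add_mem _ h1 h2
      rw [map_add]
      convert this using 1
      abel
    · exact hcl.preimage (f := fun g => g - S i g) (by fun_prop)
  set G := aucSub fun k => mAvg S (n k) with hG
  haveI : CompleteSpace G := hcl.completeSpace_coe
  rw [← Submodule.orthogonal_eq_bot_iff, Submodule.eq_bot_iff]
  intro h hh
  have hfix : ∀ i, S i h = h := by
    intro i
    have h1 := (Submodule.mem_orthogonal _ _).1 hh _ (hall i h)
    rw [inner_sub_left, real_inner_self_eq_norm_sq] at h1
    have h2 : ‖S i h‖ ≤ ‖h‖ := by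
      refine ((S i).le_opNorm h).trans ?_
      exact mul_le_of_le_one_left (norm_nonneg _) (hS i).norm_le
    have h3 := norm_sub_sq_real (S i h) h
    have h4 : ‖S i h‖^2 ≤ ‖h‖^2 := by gcongr
    have h5 : ‖S i h - h‖^2 = 0 := le_antisymm (by linarith) (sq_nonneg _)
    exact sub_eq_zero.1 (norm_eq_zero.1 (by simpa using h5))
  have hmem : h ∈ G := by
    rw [hG, mem_aucSub]
    intro ε hε δ hδ
    have : ∀ᶠ k in atTop, ∀ i, n k i ≠ 0 :=
      eventually_all.2 fun i => (hn i).eventually_ne_atTop 0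
    obtain ⟨K, hK⟩ := eventually_atTop.1 this
    refine ⟨univ, MeasurableSet.univ, by simp, K, fun k hk l hl => ae_of_all _ fun ω _ => ?_⟩
    beta_reduce
    rw [mAvg_fix hfix (hK k hk), mAvg_fix hfix (hK l hl)]
    simpa using hδ.le
  exact inner_self_eq_zero.1 ((Submodule.mem_orthogonal _ _).1 hh _ hmem)

lemma aucSub_one {μ : Measure Ω} {d : ℕ} {S1 : Fin d → Lp ℝ 1 μ →L[ℝ] Lp ℝ 1 μ}
    {S2 : Fin d → Lp ℝ 2 μ →L[ℝ] Lp ℝ 2 μ} {n : ℕ → Fin d → ℕ}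
    (h1 : MaxCont fun k => mAvg S1 (n k)) (h2 : aucSub (fun k => mAvg S2 (n k)) = ⊤)
    (hbr : ∀ k (f1 : Lp ℝ 1 μ) (f2 : Lp ℝ 2 μ), f1.1 = f2.1 → (mAvg S1 (n k) f1).1 = (mAvg S2 (n k) f2).1)
    (f : Lp ℝ 1 μ) : AuC μ fun k => mAvg S1 (n k) f := by
  have hcl := aucSub_closed h1
  change f ∈ aucSub fun k => mAvg S1 (n k)
  refine Lp.induction (p := 1) (by simp) (motive := fun g => g ∈ aucSub fun k => mAvg S1 (n k)) ?_ ?_ ?_ f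
  · intro c s hs hμs
    rw [Lp.simpleFunc.coe_indicatorConst, mem_aucSub]
    have : indicatorConstLp 2 hs hμs.ne c ∈ aucSub fun k => mAvg S2 (n k) := by rw [h2]; trivial
    rw [mem_aucSub] at this
    have e : (fun k => (mAvg S1 (n k) (indicatorConstLp 1 hs hμs.ne c) : Ω → ℝ)) =
        fun k => (mAvg S2 (n k) (indicatorConstLp 2 hs hμs.ne c) : Ω → ℝ) := by
      funext k
      exact congrArg (fun g : Ω →ₘ[μ] ℝ => (g : Ω → ℝ)) (hbr k _ _ rfl)
    rw [e]
    exact this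
  · intro f g hf hg _ h1 h2
    exact Submodule.add_mem _ h1 h2
  · exact hcl

/-- **Commutative case of Theorem 5.5**: for a commuting family of positive
Dunford–Schwartz operators `T₁,…,T_d` on a σ-finite measure space, `f ∈ L¹(μ)`,
and any sequence `n(k) → ∞` remaining in a sector of `ℕ^d`, the averages
`A_{n(k)}(f)` converge almost uniformly to some `f̂ ∈ L¹(μ)`. -/
theorem multiparam_sector_au_L1 (μ : Measure Ω) [SigmaFinite μ] {d : ℕ}
    (T : Fin d → (Ω →ₘ[μ] ℝ) → (Ω →ₘ[μ] ℝ)) (hT : ∀ i, IsPosDS μ (T i))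
    (hcomm : ∀ i j, ∀ f : Ω →ₘ[μ] ℝ, MemL1pLinf μ f → T i (T j f) = T j (T i f))
    (f : Ω →ₘ[μ] ℝ) (hf : eLpNorm f 1 μ ≠ ∞)
    (n : ℕ → Fin d → ℕ) (hn : ∀ i, Tendsto (fun k => n k i) atTop atTop)
    (hsec : InSector n) :
    ∃ fhat : Ω →ₘ[μ] ℝ, eLpNorm fhat 1 μ ≠ ∞ ∧
      AuTendsto μ atTop (fun k => multiAvg μ T (n k) f) fhat := by
  set S1 : Fin d → Lp ℝ 1 μ →L[ℝ] Lp ℝ 1 μ := fun i => opL1 (hT i) with hS1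
  set S2 : Fin d → Lp ℝ 2 μ →L[ℝ] Lp ℝ 2 μ := fun i => opL2 (hT i) with hS2
  have d1 : ∀ i, DOp (leOne μ (p := 1)) (S1 i) := fun i => opL1_dop (hT i)
  have d2 : ∀ i, DOp (leOne μ (p := 2)) (S2 i) := fun i => opL2_dop (hT i)
  have c1 : ∀ i j, Commute (S1 i) (S1 j) := fun i j => by
    refine ContinuousLinearMap.ext fun g => Subtype.ext ?_
    exact hcomm i j g.1 (memSum_L1 g)
  have c2 : ∀ i j, Commute (S2 i) (S2 j) := fun i j => by
    refine ContinuousLinearMap.ext fun g => Subtype.ext ?_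
    exact hcomm i j g.1 (memSum_L2 (Lp.memLp g))
  have b1 : ∀ k (g : Lp ℝ 1 μ), (mAvg S1 (n k) g).1 = multiAvg μ T (n k) g.1 :=
    fun k g => multi_bridge (fun i f => opL1_coe (hT i) f) (n k) g
  have b2 : ∀ k (g : Lp ℝ 2 μ), (mAvg S2 (n k) g).1 = multiAvg μ T (n k) g.1 :=
    fun k g => multi_bridge (fun i f => opL2_coe (hT i) f) (n k) g
  have hbr : ∀ k (f1 : Lp ℝ 1 μ) (f2 : Lp ℝ 2 μ), f1.1 = f2.1 →
      (mAvg S1 (n k) f1).1 = (mAvg S2 (n k) f2).1 := by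
    intro k f1 f2 h
    rw [b1, b2, h]
  have m1 := maxCont_one d1 c1 hsec
  have m2 := maxCont_two d2 m1 hbr
  let f1 : Lp ℝ 1 μ := ⟨f, Lp.mem_Lp_iff_eLpNorm_lt_top.2 hf.lt_top⟩
  have hA := aucSub_one m1 (aucSub_two d2 c2 hn m2) hbr f1
  obtain ⟨g, hg, hlim⟩ := hA.limit (C := ‖f1‖) (fun k => by
    refine ((mAvg S1 (n k)).le_opNorm f1).trans ?_
    exact mul_le_of_le_one_left (norm_nonneg _) (mAvg_dop_lp d1 (n k)).norm_le)
  refine ⟨g, hg, ?_⟩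
  have e : (fun k => multiAvg μ T (n k) f) = fun k => (mAvg S1 (n k) f1).1 := by
    funext k; exact (b1 k f1).symm
  rw [e]
  exact hlim
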